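/- For every η > 0 and all positive integers d₁, d₂ there exist κ > 0 and a constant C = C(η, d₁, d₂) such that the following holds for every prime p. Let χ be a non-trivial multiplicative character modulo p, let ψ be a non-trivial additive character of 𝔽_p, let P ∈ 𝔽_p(X) be a rational function whose numerator and denominator have degree at most d₁, and let Q ∈ 𝔽_p(X, Y) be a rational function whose numerator and denominator have total degree at most d₂. Then for all real K, M, N with p^{1/5 + η} ≤ K, M, N < p^{1/4 − η}, one has |∑_{1 ≤ k ≤ K} ∑_{1 ≤ m ≤ M} ∑_{1 ≤ n ≤ N} χ(k + m·n) · ψ(P(m) + Q(k, n))| ≤ C·K·M·N·p^{−κ}, where terms with m a pole of P, or (k, n) a pole of Q, are omitted from the sum. -/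

import Mathlib

open Finset

section Stepanov
open Polynomial

lemma step_nonvanish {F : Type*} [Field F] (w d L : ℕ) (r : ℕ → F[X])
    (hr : ∀ l < L, (r l).degree < (w : ℕ)) (h0 : F[X]) (hh : h0.eval 0 ≠ 0)
    (hU : ∑ l ∈ range L, r l * X ^ (w * l + l / d) * h0 ^ (l % d) = 0) :
    ∀ l < L, r l = 0 := by
  intro l
  induction l using Nat.strong_induction_on with
  | _ l ih =>
    intro hl
    have hcop : IsCoprime (X : F[X]) h0 := by
      rw [(irreducible_X).coprime_iff_not_dvd, X_dvd_iff, coeff_zero_eq_eval_zero]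
      exact hh
    rw [← Finset.add_sum_erase _ _ (mem_range.mpr hl)] at hU
    have hdiv : (X : F[X]) ^ (w * l + l / d + w) ∣
        ∑ x ∈ (range L).erase l, r x * X ^ (w * x + x / d) * h0 ^ (x % d) := by
      apply Finset.dvd_sum
      intro x hx
      simp only [mem_erase, mem_range] at hx
      rcases lt_or_gt_of_ne hx.1 with h | h
      · rw [ih x h hx.2]; simp
      · apply Dvd.dvd.mul_right
        apply Dvd.dvd.mul_left
        apply pow_dvd_pow
        have h1 : l / d ≤ x / d := Nat.div_le_div_right h.le
        have h2 : w * (l + 1) ≤ w * x := Nat.mul_le_mul_left _ h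
        nlinarith
    have h2 : (X : F[X]) ^ (w * l + l / d + w) ∣ r l * X ^ (w * l + l / d) * h0 ^ (l % d) := by
      rw [eq_neg_of_add_eq_zero_left hU]
      exact (dvd_neg).mpr hdiv
    have h3 : (X : F[X]) ^ w ∣ r l * h0 ^ (l % d) := by
      rw [pow_add, mul_comm (r l), mul_assoc] at h2
      exact (mul_dvd_mul_iff_left (pow_ne_zero _ X_ne_zero)).mp h2
    have h4 : (X : F[X]) ^ w ∣ r l :=
      (hcop.pow_left.pow_right).dvd_of_dvd_mul_right h3
    by_contra hne
    have := degree_le_of_dvd h4 hne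
    rw [degree_X_pow] at this
    exact absurd (hr l hl) (not_lt.mpr this)

lemma step_count {F : Type*} [Field F] [Fintype F] [DecidableEq F] (p : ℕ) [Fact p.Prime]
    [CharP F p] (s Q d w D : ℕ) (hQp : Q = p ^ s) (hcard : Fintype.card F = Q ^ 2)
    (hd : 1 ≤ d) (hQ : Q = d * w + 1) (g : F[X]) (hg : g.eval 0 ≠ 0)
    (hD : (X * g).natDegree ≤ D) (c : F)
    (hlarge : (d + 1) * (D + 2) + 2 ≤ Q) :
    #{x : F | (X * g).eval x ≠ 0 ∧ ((X * g).eval x) ^ (w * (Q + 1)) = c} ≤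
      w * Q + (2 * (d * (D + 1)) + D + 2) * Q := by
  classical
  set f : F[X] := X * g with hf
  set C1 := d * (D + 1) with hC1
  set L := Q + C1 with hL
  set R := (w - 1) * Q + L / d + D * (d * w) + 1 with hR
  have hw : 1 ≤ w := by
    rcases Nat.eq_zero_or_pos w with h | h
    · subst h; simp at hQ; nlinarith
    · exact h
  let e := (Polynomial.degreeLTEquiv F w).symm
  let r : (Fin L → Fin w → F) → ℕ → F[X] := fun ρ l =>
    if h : l < L then ((e (ρ ⟨l, h⟩) : Polynomial.degreeLT F w) : F[X]) else 0
  have hrdeg : ∀ ρ l, (r ρ l).degree < (w : ℕ) := by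
    intro ρ l
    simp only [r]
    split_ifs with h
    · exact Polynomial.mem_degreeLT.mp (e (ρ ⟨l, h⟩)).2
    · simp
  have hrsub : ∀ ρ ρ' l, r (ρ - ρ') l = r ρ l - r ρ' l := by
    intro ρ ρ' l
    simp only [r]
    split_ifs with h
    · simp [map_sub]
    · simp
  let V : (Fin L → Fin w → F) → F[X] := fun ρ =>
    ∑ l ∈ range L, r ρ l ^ Q * X ^ (l / d) * C (c ^ (l % d)) * f ^ ((d - 1 - l % d) * w)
  have hVsub : ∀ ρ ρ', V (ρ - ρ') = V ρ - V ρ' := by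
    intro ρ ρ'
    simp only [V, hrsub]
    rw [← Finset.sum_sub_distrib]
    apply Finset.sum_congr rfl
    intro l _
    rw [hQp, sub_pow_char_pow]
    ring
  have hVdeg : ∀ ρ, (V ρ).natDegree < R := by
    intro ρ
    rw [Nat.lt_iff_le_pred (Nat.succ_pos _)]
    apply Polynomial.natDegree_sum_le_of_forall_le
    intro l hl
    rw [mem_range] at hl
    have h1 : (r ρ l).natDegree ≤ w - 1 := by
      have := hrdeg ρ l
      by_cases h : r ρ l = 0
      · simp [h]
      · rw [← natDegree_lt_iff_degree_lt h] at this; omega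
    have h2 : l / d ≤ L / d := Nat.div_le_div_right hl.le
    have h3 : (d - 1 - l % d) * w ≤ d * w := Nat.mul_le_mul_right _ (by omega)
    calc _ ≤ Q * (w - 1) + (l / d) + 0 + ((d - 1 - l % d) * w) * D := by
          refine natDegree_mul_le_of_le (natDegree_mul_le_of_le (natDegree_mul_le_of_le ?_ ?_) ?_) ?_
          · exact natDegree_pow_le_of_le _ h1
          · simp
          · simp
          · exact natDegree_pow_le_of_le _ hD
      _ ≤ R - 1 := by
          have : ((d - 1 - l % d) * w) * D ≤ (d * w) * D := Nat.mul_le_mul_right _ h3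
          simp only [hR]
          rw [mul_comm Q, mul_comm D]
          simp only [Nat.add_sub_cancel]
          omega
  -- pigeonhole
  have hcount : R < L * w := by
    have h1 : L / d ≤ Q + C1 := (Nat.div_le_self _ _)
    have h2 : L / d * d ≤ Q + C1 := Nat.div_mul_le_self _ _
    have h3 : L / d ≤ w + D + 2 := by
      have : L = 1 + d * (w + (D + 1)) := by simp only [hL, hC1, hQ]; ring
      rw [this, Nat.add_mul_div_left _ _ (by omega)]
      have : 1 / d ≤ 1 := Nat.div_le_self _ _
      omega
    have h4 : L * w = w * Q + (D + 1) * (d * w) := by simp only [hL, hC1]; ring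
    have h5 : (w - 1) * Q + Q = w * Q := by
      obtain ⟨v, rfl⟩ : ∃ v, w = v + 1 := ⟨w - 1, by omega⟩
      simp; ring
    have h6 : w ≤ d * w := Nat.le_mul_of_pos_left _ hd
    rw [h4, hR]
    have h7 : (D + 1) * (d * w) = D * (d * w) + d * w := by ring
    have h8 : (d + 1) * (D + 2) = d * D + D + 2 * d + 2 := by ring
    nlinarith [Nat.zero_le (d * D)]
  have hpig : ∃ ρ ρ', ρ ≠ ρ' ∧ (fun ρ => (fun i : Fin R => (V ρ).coeff i)) ρ =
      (fun ρ => (fun i : Fin R => (V ρ).coeff i)) ρ' := by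
    apply Fintype.exists_ne_map_eq_of_card_lt
    simp only [Fintype.card_fun, Fintype.card_fin]
    rw [← pow_mul, mul_comm w L]
    exact Nat.pow_lt_pow_right Fintype.one_lt_card hcount
  obtain ⟨ρ₁, ρ₂, hne, heq⟩ := hpig
  set ρ := ρ₁ - ρ₂ with hρ
  have hVρ : V ρ = 0 := by
    rw [hρ, hVsub, sub_eq_zero]
    ext i
    by_cases hi : i < R
    · exact congrFun heq ⟨i, hi⟩
    · rw [coeff_eq_zero_of_natDegree_lt ((hVdeg _).trans_le (not_lt.mp hi)),
        coeff_eq_zero_of_natDegree_lt ((hVdeg _).trans_le (not_lt.mp hi))]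
  have hρ0 : ρ ≠ 0 := sub_ne_zero.mpr hne
  set U : F[X] := ∑ l ∈ range L, r ρ l * X ^ (w * l + l / d) * (g ^ w) ^ (l % d) with hU
  have hU0 : U ≠ 0 := by
    intro h
    have := step_nonvanish w d L (r ρ) (fun l _ => hrdeg ρ l) (g ^ w)
      (by rw [eval_pow]; exact pow_ne_zero _ hg) h
    apply hρ0
    funext l
    have h1 := this l l.2
    simp only [r, l.2, dif_pos, Fin.eta] at h1
    have h2 : e (ρ l) = 0 := Subtype.ext h1
    simpa using h2
  have hterm : ∀ l, X ^ (w * l + l / d) * (g ^ w) ^ (l % d) = X ^ (Q * (l / d)) * (f ^ w) ^ (l % d) := by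
    intro l
    rw [hf, mul_pow, mul_pow, ← mul_assoc, ← pow_mul, ← pow_mul, ← pow_add]
    congr 2
    conv_lhs => rw [← Nat.div_add_mod l d]
    rw [hQ, Nat.mul_add_div (by omega), Nat.mod_div_self]
    ring
  have hUdeg : U.natDegree ≤ w * Q + (2 * C1 + D + 2) * Q := by
    rw [hU]
    apply Polynomial.natDegree_sum_le_of_forall_le
    intro l hl
    rw [mem_range] at hl
    have h1 : (r ρ l).natDegree ≤ w := by
      have := hrdeg ρ l
      by_cases h : r ρ l = 0
      · simp [h]
      · rw [← natDegree_lt_iff_degree_lt h] at this; omega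
    have hg' : g.natDegree ≤ D := by
      have hg0 : g ≠ 0 := by rintro rfl; simp at hg
      rw [hf, natDegree_mul X_ne_zero hg0] at hD
      omega
    have h2 : l / d ≤ l := Nat.div_le_self _ _
    have h3 : l % d ≤ d := (Nat.mod_lt _ hd).le
    have hwQ : w ≤ Q := by nlinarith
    have hQ1 : 1 ≤ Q := by omega
    calc _ ≤ w + (w * l + l / d) + (l % d) * (w * D) := by
          refine natDegree_mul_le_of_le (natDegree_mul_le_of_le ?_ ?_) ?_
          · exact h1
          · simp
          · exact natDegree_pow_le_of_le _ (natDegree_pow_le_of_le _ hg')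
      _ ≤ Q + (w * (Q + C1) + (Q + C1)) + d * (w * D) := by
          have := Nat.mul_le_mul_left w hl.le
          have := Nat.mul_le_mul_right (w * D) h3
          simp only [hL] at *
          omega
      _ ≤ _ := by
          have : d * (w * D) ≤ Q * D := by rw [← mul_assoc]; exact Nat.mul_le_mul_right _ (by omega)
          have : w * C1 ≤ Q * C1 := Nat.mul_le_mul_right _ hwQ
          have : C1 ≤ Q * C1 := Nat.le_mul_of_pos_left _ hQ1
          nlinarith
  refine le_trans ?_ hUdeg
  refine le_trans ?_ (Polynomial.card_roots' U)
  refine le_trans ?_ (Multiset.toFinset_card_le _)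
  apply Finset.card_le_card
  intro x hx
  simp only [mem_filter, mem_univ, true_and] at hx
  obtain ⟨hfx, hxc⟩ := hx
  rw [Multiset.mem_toFinset, mem_roots hU0, IsRoot.def]
  have hxq : x ^ (Q * Q) = x := by
    rw [← sq, ← hcard]; exact FiniteField.pow_card x
  have key : (V ρ).eval x = (f.eval x) ^ ((d - 1) * w) * (U.eval x) ^ Q := by
    simp only [V, hU, eval_finsetSum]
    rw [hQp, sum_pow_char_pow, ← hQp, Finset.mul_sum]
    apply Finset.sum_congr rfl
    intro l _
    rw [mul_assoc (r ρ l), hterm]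
    simp only [eval_mul, eval_pow, eval_X, eval_C, mul_pow]
    have hxx : (x ^ (Q * (l / d))) ^ Q = x ^ (l / d) := by
      rw [← pow_mul, show Q * (l / d) * Q = Q * Q * (l / d) by ring, pow_mul, hxq]
    rw [hxx]
    have hj : l % d ≤ d - 1 := by have := Nat.mod_lt l hd; omega
    obtain ⟨j', hj'⟩ := Nat.exists_eq_add_of_le hj
    rw [hj', Nat.add_sub_cancel_left, ← hxc]
    ring
  rw [hVρ, eval_zero] at key
  have := (mul_eq_zero.mp key.symm).resolve_left (pow_ne_zero _ hfx)
  exact pow_eq_zero_iff (by omega) |>.mp this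

end Stepanov


section CharSumExt
open Polynomial

lemma charsum_ext {p : ℕ} [Fact p.Prime] (χ : MulChar (ZMod p) ℂ) (hχ : χ ≠ 1) (G : (ZMod p)[X])
    (hG : G.eval 0 ≠ 0) : ∃ C : ℝ, ∃ s0 : ℕ, ∀ s : ℕ, s0 ≤ s →
      ∀ (F : Type) [Field F] [Fintype F] [Algebra (ZMod p) F], Fintype.card F = p ^ (2 * s) →
      ‖∑ x : F, χ (Algebra.norm (ZMod p) (aeval x (X * G)))‖ ≤ C * (p : ℝ) ^ s := by
  classical
  have hp : p.Prime := Fact.out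
  obtain ⟨g0, hg0⟩ := IsCyclic.exists_generator (α := (ZMod p)ˣ)
  set ζ : ℂ := χ g0 with hζ
  set d := orderOf ζ with hd
  have hcardu : Fintype.card (ZMod p)ˣ = p - 1 := ZMod.card_units p
  have hζp : ζ ^ (p - 1) = 1 := by
    rw [hζ, ← map_pow, ← Units.val_pow_eq_pow_val, ← hcardu, pow_card_eq_one]; simp
  have hdp : d ∣ p - 1 := orderOf_dvd_of_pow_eq_one hζp
  obtain ⟨e, he⟩ := hdp
  have hp1 : 0 < p - 1 := by have := hp.two_le; omega
  have hd1 : 1 ≤ d := by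
    rcases Nat.eq_zero_or_pos d with h | h
    · rw [h] at he; omega
    · exact h
  have hζ1 : ζ ≠ 1 := by
    intro h
    apply hχ
    ext y
    obtain ⟨k, hk⟩ := (Submonoid.mem_powers_iff _ _).mp (mem_powers_iff_mem_zpowers.mpr (hg0 y))
    rw [← hk]
    push_cast
    rw [map_pow, ← hζ, h]; simp
  have hunit : ∀ y : ZMod p, y ≠ 0 → ∃ l ∈ range d, χ y = ζ ^ l ∧ y ^ e = (g0 : ZMod p) ^ (l * e) := by
    intro y hy
    obtain ⟨k, hk⟩ := (Submonoid.mem_powers_iff _ _).mp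
      (mem_powers_iff_mem_zpowers.mpr (hg0 (Units.mk0 y hy)))
    have hk' : y = (g0 : ZMod p) ^ k := by
      have := congrArg Units.val hk
      simpa using this.symm
    refine ⟨k % d, mem_range.mpr (Nat.mod_lt _ hd1), ?_, ?_⟩
    · rw [hk', map_pow, ← hζ, hd, pow_mod_orderOf]
    · rw [hk', ← pow_mul]
      conv_lhs => rw [← Nat.mod_add_div k d, add_mul, pow_add, mul_right_comm, ← he, pow_mul]
      have : (g0 : ZMod p) ^ (p - 1) = 1 := ZMod.pow_card_sub_one_eq_one (Units.ne_zero g0)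
      rw [pow_mul (g0 : ZMod p) (p - 1), this, one_pow, mul_one, pow_mul]
  set D := (X * G).natDegree with hD
  have hG0 : G ≠ 0 := by rintro rfl; simp at hG
  have hXG : X * G ≠ 0 := mul_ne_zero X_ne_zero hG0
  set C' := 2 * (d * (D + 1)) + D + 2 with hC'
  refine ⟨d * C' + D, (d + 1) * (D + 2) + 2, ?_⟩
  intro s hs F _ _ _ hcard
  haveI : CharP F p := (Algebra.charP_iff (ZMod p) F p).mp inferInstance
  set Q := p ^ s with hQ
  have hQs : s < Q := Nat.lt_pow_self hp.one_lt
  have hcard' : Fintype.card F = Q ^ 2 := by rw [hcard, hQ, ← pow_mul, mul_comm]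
  obtain ⟨w, hw⟩ : ∃ w, Q = d * w + 1 := by
    obtain ⟨u, hu⟩ := Nat.sub_one_dvd_pow_sub_one p s
    have : 1 ≤ p ^ s := Nat.one_le_pow _ _ hp.pos
    refine ⟨e * u, ?_⟩
    rw [← mul_assoc, ← he, ← hu]; omega
  set g : F[X] := G.map (algebraMap (ZMod p) F) with hg
  have hfg : (X * g) = (X * G).map (algebraMap (ZMod p) F) := by simp [hg]
  have hev : ∀ x : F, aeval x (X * G) = (X * g).eval x := by
    intro x; rw [hfg, eval_map_algebraMap]
  have hgev : g.eval 0 ≠ 0 := by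
    rw [hg, ← map_zero (algebraMap (ZMod p) F), eval_map_apply]
    simpa using hG
  have hgD : (X * g).natDegree ≤ D := by rw [hfg]; exact natDegree_map_le
  -- norm
  have hnorm : ∀ y : F, algebraMap (ZMod p) F (Algebra.norm (ZMod p) y ^ e) = y ^ (w * (Q + 1)) := by
    intro y
    haveI : Module.Finite (ZMod p) F := Module.Finite.of_finite
    rw [map_pow, FiniteField.algebraMap_norm_eq_pow, ← pow_mul]
    congr 1
    rw [Nat.card_eq_fintype_card, Nat.card_eq_fintype_card, ZMod.card, hcard']
    have h1 : Q ^ 2 - 1 = (w * (Q + 1)) * d := by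
      rw [hw]; 
      have : (d * w + 1) ^ 2 = (w * (d * w + 1 + 1)) * d + 1 := by ring
      omega
    have h2 : (p - 1) ∣ Q ^ 2 - 1 := by
      rw [hQ, ← pow_mul]; exact Nat.sub_one_dvd_pow_sub_one p _
    obtain ⟨v, hv⟩ := h2
    rw [hv, Nat.mul_div_cancel_left _ hp1]
    have : d * (v * e) = d * (w * (Q + 1)) := by
      rw [mul_comm d (w * (Q + 1)), ← h1, hv, he]; ring
    exact Nat.eq_of_mul_eq_mul_left hd1 this
  set good : Finset F := univ.filter (fun x => (X * g).eval x ≠ 0) with hgood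
  have hne : ∀ x ∈ good, Algebra.norm (ZMod p) ((X * g).eval x) ≠ 0 := by
    intro x hx
    rw [hgood, mem_filter] at hx
    rw [Ne, Algebra.norm_eq_zero_iff]
    exact hx.2
  have hlx : ∀ x : F, ∃ l ∈ range d, x ∈ good → (χ (Algebra.norm (ZMod p) ((X * g).eval x)) = ζ ^ l ∧
      ((X * g).eval x) ^ (w * (Q + 1)) = algebraMap (ZMod p) F ((g0 : ZMod p) ^ (l * e))) := by
    intro x
    by_cases hx : x ∈ good
    · obtain ⟨l, hl, h1, h2⟩ := hunit _ (hne x hx)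
      refine ⟨l, hl, fun _ => ⟨h1, ?_⟩⟩
      rw [← h2, hnorm]
    · exact ⟨0, mem_range.mpr hd1, fun h => absurd h hx⟩
  choose lx hlx1 hlx2 using hlx
  have hsum : ∑ x : F, χ (Algebra.norm (ZMod p) (aeval x (X * G))) =
      ∑ l ∈ range d, (#{x ∈ good | lx x = l} : ℂ) * ζ ^ l := by
    have h1 : ∑ x : F, χ (Algebra.norm (ZMod p) (aeval x (X * G))) =
        ∑ x ∈ good, χ (Algebra.norm (ZMod p) ((X * g).eval x)) := by
      rw [hgood, sum_filter]
      apply sum_congr rfl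
      intro x _
      rw [hev]
      split_ifs with h
      · rfl
      · rw [not_not.mp h, Algebra.norm_zero]; exact MulChar.map_zero χ
    rw [h1, ← sum_fiberwise_of_maps_to (g := lx) (t := range d) (fun x _ => hlx1 x)]
    apply sum_congr rfl
    intro l _
    rw [← nsmul_eq_mul, ← sum_const]
    apply sum_congr rfl
    intro x hx
    rw [mem_filter] at hx
    rw [(hlx2 x hx.1).1, hx.2]
  have hgoodcard : #good = ∑ l ∈ range d, #{x ∈ good | lx x = l} :=
    card_eq_sum_card_fiberwise (fun x _ => hlx1 x)
  have hgoodge : Q ^ 2 ≤ #good + D := by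
    have h1 : #good + #{x : F | ¬ (X * g).eval x ≠ 0} = Fintype.card F :=
      card_filter_add_card_filter_not _
    have h2 : #{x : F | ¬ (X * g).eval x ≠ 0} ≤ D := by
      refine le_trans ?_ hgD
      refine le_trans ?_ (card_roots' _)
      refine le_trans ?_ (Multiset.toFinset_card_le _)
      apply card_le_card
      intro x hx
      simp only [mem_filter, mem_univ, true_and, not_not] at hx
      rw [Multiset.mem_toFinset, mem_roots, IsRoot.def]
      · exact hx
      · rw [hfg]; exact (Polynomial.map_ne_zero hXG)
    omega
  set B := w * Q + C' * Q with hB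
  have hfib : ∀ l ∈ range d, #{x ∈ good | lx x = l} ≤ B := by
    intro l _
    refine le_trans ?_ (step_count p s Q d w D hQ hcard' hd1 hw g hgev hgD
      (algebraMap (ZMod p) F ((g0 : ZMod p) ^ (l * e))) (by omega))
    apply card_le_card
    intro x hx
    rw [mem_filter] at hx
    simp only [mem_filter, mem_univ, true_and]
    refine ⟨(mem_filter.mp hx.1).2, ?_⟩
    rw [(hlx2 x hx.1).2, hx.2]
  have hgeom : ∑ l ∈ range d, ζ ^ l = 0 := by
    have := mul_geom_sum ζ d
    rw [hd, pow_orderOf_eq_one, sub_self] at this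
    exact (mul_eq_zero.mp this).resolve_left (sub_ne_zero.mpr hζ1)
  have hζn : ‖ζ‖ = 1 := by
    apply Complex.norm_eq_one_of_pow_eq_one hζp (by omega)
  rw [hsum]
  have h2 : ∑ l ∈ range d, (#{x ∈ good | lx x = l} : ℂ) * ζ ^ l =
      - ∑ l ∈ range d, (((B : ℝ) - #{x ∈ good | lx x = l} : ℝ) : ℂ) * ζ ^ l := by
    push_cast
    simp only [sub_mul, sum_sub_distrib]
    rw [← mul_sum, hgeom]; simp
  rw [h2, norm_neg]
  calc _ ≤ ∑ l ∈ range d, ((B : ℝ) - #{x ∈ good | lx x = l}) := by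
        refine (norm_sum_le _ _).trans (sum_le_sum ?_)
        intro l hl
        rw [norm_mul, norm_pow, hζn, one_pow, mul_one, Complex.norm_real, Real.norm_eq_abs, abs_of_nonneg]
        have := hfib l hl
        rw [sub_nonneg]; exact_mod_cast this
    _ = d * B - #good := by
        rw [sum_sub_distrib, hgoodcard]; simp
    _ ≤ _ := by
        have h3 : (Q : ℝ) ^ 2 ≤ #good + D := by exact_mod_cast hgoodge
        have h4 : (Q : ℝ) = d * w + 1 := by exact_mod_cast hw
        have h5 : (B : ℝ) = w * Q + C' * Q := by rw [hB]; push_cast; ring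
        have h6 : (1 : ℝ) ≤ Q := by exact_mod_cast (show 1 ≤ Q by omega)
        have h7 : (p : ℝ) ^ s = Q := by rw [hQ]; push_cast; rfl
        rw [h7, h5]
        have h8 : (D : ℝ) ≤ D * Q := le_mul_of_one_le_right (by positivity) h6
        have h9 : (d * w : ℝ) * Q = Q^2 - Q := by
          have : (d * w : ℝ) = Q - 1 := by linarith
          rw [this]; ring
        nlinarith

end CharSumExt


section LF
open Polynomial

lemma norm_sub_eq {K F : Type*} [Field K] [Field F] [Algebra K F] [FiniteDimensional K F]
    (a : K) (x : F) :
    Algebra.norm K (algebraMap K F a - x) =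
      ((minpoly K x).eval a) ^ (Module.finrank K F / (minpoly K x).natDegree) := by
  set y := x - algebraMap K F a with hy
  have hint : IsIntegral K y := IsIntegral.of_finite K y
  have h1 := Algebra.norm_eq_norm_adjoin K y
  have h2 := Algebra.PowerBasis.norm_gen_eq_coeff_zero_minpoly (IntermediateField.adjoin.powerBasis hint)
  rw [IntermediateField.adjoin.powerBasis_gen, IntermediateField.minpoly_gen,
    IntermediateField.adjoin.powerBasis_dim] at h2
  have hm : minpoly K y = (minpoly K x).comp (X + C a) := minpoly.sub_algebraMap x a
  have hdeg : (minpoly K y).natDegree = (minpoly K x).natDegree := by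
    rw [hm, natDegree_comp]; simp
  have hc : (minpoly K y).coeff 0 = (minpoly K x).eval a := by
    rw [coeff_zero_eq_eval_zero, hm, eval_comp]; simp
  have hf : (minpoly K x).natDegree * Module.finrank (IntermediateField.adjoin K {y}) F
      = Module.finrank K F := by
    rw [← hdeg, ← IntermediateField.adjoin.finrank hint]
    exact Module.finrank_mul_finrank _ _ _
  have hpos : 0 < (minpoly K x).natDegree := minpoly.natDegree_pos (IsIntegral.of_finite K x)
  have hk : Module.finrank K F / (minpoly K x).natDegree =
      Module.finrank (IntermediateField.adjoin K {y}) F := by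
    rw [← hf, Nat.mul_div_cancel_left _ hpos]
  have h3 : algebraMap K F a - x = algebraMap K F (-1) * y := by rw [hy]; simp
  rw [h3, map_mul, Algebra.norm_algebraMap, h1, h2, hk, hc, hdeg, mul_pow, ← pow_mul, hf,
    ← mul_assoc, ← mul_pow]
  simp

open Classical in
lemma card_minpoly_eq {K F : Type*} [Field K] [Fintype K] [Field F] [Fintype F]
    [Algebra K F]
    (P : K[X]) (hP : Irreducible P) (hm : P.Monic) (hdvd : P.natDegree ∣ Module.finrank K F) :
    #{x : F | minpoly K x = P} = P.natDegree := by
  classical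
  have : FiniteDimensional K F := Module.Finite.of_finite
  have h1 := (hP.natDegree_dvd_iff_dvd_X_pow_card_pow_sub_X).mp hdvd
  rw [Nat.card_eq_fintype_card, ← Module.card_eq_pow_finrank (K := K) (V := F)] at h1
  have hsep : P.Separable := PerfectField.separable_of_irreducible hP
  have hspl : (P.map (algebraMap K F)).Splits := by
    have h2 := Polynomial.splits_X_pow_nat_card_sub_X (K := F)
    rw [Nat.card_eq_fintype_card] at h2
    refine Splits.of_dvd h2 ?_ ?_
    · have := FiniteField.X_pow_card_sub_X_ne_zero F (Fintype.one_lt_card (α := F))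
      exact this
    · have := Polynomial.map_dvd (algebraMap K F) h1
      simpa using this
  have h3 : (P.aroots F).card = P.natDegree := by
    rw [aroots, ← hspl.natDegree_eq_card_roots, natDegree_map]
  have h4 : (P.aroots F).Nodup := nodup_aroots_iff_of_splits (hm.ne_zero) hspl |>.mpr hsep
  rw [← h3, ← Multiset.toFinset_card_of_nodup h4]
  congr 1
  ext x
  simp only [mem_filter, mem_univ, true_and, Multiset.mem_toFinset, mem_aroots]
  constructor
  · rintro rfl; exact ⟨hm.ne_zero, minpoly.aeval K x⟩
  · rintro ⟨-, h⟩; exact (minpoly.eq_of_irreducible_of_monic hP h hm).symm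

end LF


section LF2
open Polynomial

lemma mon_finite (K : Type*) [Field K] [Fintype K] (n : ℕ) :
    {g : K[X] | g.Monic ∧ g.natDegree = n}.Finite := by
  have : Finite {g : K[X] // g.Monic ∧ g.natDegree = n} :=
    Finite.of_equiv _ ((monicEquivDegreeLT n).trans (degreeLTEquiv K n).toEquiv).symm
  exact Set.finite_coe_iff.mp this

/-- monic polynomials of degree n -/
noncomputable def monS (K : Type*) [Field K] [Fintype K] (n : ℕ) : Finset K[X] :=
  (mon_finite K n).toFinset

lemma mem_monS {K : Type*} [Field K] [Fintype K] {n : ℕ} {g : K[X]} :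
    g ∈ monS K n ↔ g.Monic ∧ g.natDegree = n := by
  simp [monS]

open Classical in
/-- monic irreducible polynomials of degree at most n -/
noncomputable def irrS (K : Type*) [Field K] [Fintype K] (n : ℕ) : Finset K[X] :=
  ((range (n + 1)).biUnion (monS K)).filter Irreducible

lemma mem_irrS {K : Type*} [Field K] [Fintype K] {n : ℕ} {g : K[X]} :
    g ∈ irrS K n ↔ g.Monic ∧ g.natDegree ≤ n ∧ Irreducible g := by
  classical
  simp only [irrS, mem_filter, mem_biUnion, mem_range, mem_monS]
  constructor
  · rintro ⟨⟨a, h1, h2, h3⟩, h4⟩; exact ⟨h2, by omega, h4⟩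
  · rintro ⟨h1, h2, h3⟩; exact ⟨⟨_, by omega, h1, rfl⟩, h3⟩

open Classical in
lemma degree_identity {K : Type*} [Field K] [Fintype K] {n : ℕ} {g : K[X]} (hg : g ∈ monS K n) :
    n = ∑ P ∈ irrS K n, P.natDegree * #{k ∈ Icc 1 n | P ^ k ∣ g} := by
  obtain ⟨hm, hn⟩ := mem_monS.mp hg
  have hg0 := hm.ne_zero
  set s := UniqueFactorizationMonoid.normalizedFactors g with hs
  have hprod : s.prod = g := by
    rw [hs, UniqueFactorizationMonoid.prod_normalizedFactors_eq hg0, hm.normalize_eq_self]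
  have hsm : ∀ P ∈ s, P.Monic ∧ Irreducible P ∧ P ∣ g := by
    intro P hP
    have h1 := UniqueFactorizationMonoid.irreducible_of_normalized_factor P hP
    refine ⟨?_, h1, UniqueFactorizationMonoid.dvd_of_mem_normalizedFactors hP⟩
    have := UniqueFactorizationMonoid.normalize_normalized_factor P hP
    rw [← this]; exact monic_normalize h1.ne_zero
  have hle : ∀ P, P ∣ g → P.natDegree ≤ n := fun P hP => hn ▸ natDegree_le_of_dvd hP hg0
  have hcount : ∀ P ∈ irrS K n, #{k ∈ Icc 1 n | P ^ k ∣ g} = s.count P := by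
    intro P hP
    obtain ⟨h1, h2, h3⟩ := mem_irrS.mp hP
    have hem := UniqueFactorizationMonoid.emultiplicity_eq_count_normalizedFactors h3 hg0
    rw [h1.normalize_eq_self] at hem
    have hiff : ∀ k, P ^ k ∣ g ↔ k ≤ s.count P := by
      intro k
      rw [pow_dvd_iff_le_emultiplicity, hem]; norm_cast
    have hcn : s.count P ≤ n := by
      have := hle _ ((hiff _).mpr le_rfl)
      rw [natDegree_pow] at this
      have := h3.natDegree_pos
      nlinarith
    have : {k ∈ Icc 1 n | P ^ k ∣ g} = Icc 1 (s.count P) := by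
      ext k
      simp only [mem_filter, mem_Icc, hiff]
      omega
    rw [this]; simp
  calc n = g.natDegree := hn.symm
    _ = (s.map natDegree).sum := by
        rw [← hprod]
        conv_lhs => rw [natDegree_multiset_prod_of_monic _ (fun P hP => (hsm P (by rwa [hprod] at *)).1)]
    _ = ∑ P ∈ s.toFinset, s.count P • P.natDegree := Finset.sum_multiset_map_count _ _
    _ = ∑ P ∈ irrS K n, s.count P • P.natDegree := by
        apply sum_subset
        · intro P hP
          rw [Multiset.mem_toFinset] at hP
          obtain ⟨h1, h2, h3⟩ := hsm P hP
          exact mem_irrS.mpr ⟨h1, hle P h3, h2⟩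
        · intro P _ hP
          rw [Multiset.mem_toFinset] at hP
          simp [Multiset.count_eq_zero_of_notMem hP]
    _ = _ := by
        apply sum_congr rfl
        intro P hP
        rw [hcount P hP, smul_eq_mul, mul_comm]

/-- coefficients of the L-function -/
noncomputable def aL {K : Type*} [Field K] [Fintype K] (lam : K[X] →* ℂ) (n : ℕ) : ℂ :=
  ∑ g ∈ monS K n, lam g

open Classical in
lemma sum_dvd_eq {K : Type*} [Field K] [Fintype K] (lam : K[X] →* ℂ) (n : ℕ) (P : K[X])
    (hP : P.Monic) (hn : P.natDegree ≤ n) :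
    ∑ g ∈ monS K n with P ∣ g, lam g = lam P * aL lam (n - P.natDegree) := by
  rw [aL, mul_sum]
  symm
  apply sum_bij (fun h _ => P * h)
  · intro h hh
    obtain ⟨h1, h2⟩ := mem_monS.mp hh
    rw [mem_filter, mem_monS]
    refine ⟨⟨hP.mul h1, ?_⟩, dvd_mul_right _ _⟩
    rw [hP.natDegree_mul h1, h2]; omega
  · intro a _ b _ hab
    exact mul_left_cancel₀ hP.ne_zero hab
  · intro g hg
    rw [mem_filter, mem_monS] at hg
    obtain ⟨⟨h1, h2⟩, h, rfl⟩ := hg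
    have hm : h.Monic := hP.of_mul_monic_left h1
    refine ⟨h, mem_monS.mpr ⟨hm, ?_⟩, rfl⟩
    rw [hP.natDegree_mul hm] at h2; omega
  · intro h _; rw [map_mul]

open Classical in
lemma sum_dvd_eq_zero {K : Type*} [Field K] [Fintype K] (lam : K[X] →* ℂ) (n : ℕ) (P : K[X])
    (hn : n < P.natDegree) :
    ∑ g ∈ monS K n with P ∣ g, lam g = 0 := by
  rw [filter_eq_empty_iff.mpr, sum_empty]
  intro g hg hd
  obtain ⟨h1, h2⟩ := mem_monS.mp hg
  have := natDegree_le_of_dvd hd h1.ne_zero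
  omega

/-- prime power sums -/
noncomputable def sL {K : Type*} [Field K] [Fintype K] (lam : K[X] →* ℂ) (m : ℕ) : ℂ :=
  ∑ P ∈ irrS K m, if P.natDegree ∣ m then (P.natDegree : ℂ) * lam P ^ (m / P.natDegree) else 0

lemma newton_L {K : Type*} [Field K] [Fintype K] (lam : K[X] →* ℂ) (n : ℕ) :
    (n : ℂ) * aL lam n = ∑ m ∈ Icc 1 n, sL lam m * aL lam (n - m) := by
  classical
  have h1 : (n : ℂ) * aL lam n = ∑ P ∈ irrS K n, ∑ k ∈ Icc 1 n,
      (P.natDegree : ℂ) * ∑ g ∈ monS K n with P ^ k ∣ g, lam g := by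
    rw [aL, mul_sum]
    calc _ = ∑ g ∈ monS K n, ∑ P ∈ irrS K n, ∑ k ∈ Icc 1 n,
          (P.natDegree : ℂ) * if P ^ k ∣ g then lam g else 0 := by
          apply sum_congr rfl
          intro g hg
          conv_lhs => rw [degree_identity hg]
          push_cast
          rw [sum_mul]
          apply sum_congr rfl
          intro P _
          rw [← mul_sum, ← sum_filter, sum_const, nsmul_eq_mul, mul_assoc]
      _ = _ := by
          rw [sum_comm]
          apply sum_congr rfl
          intro P _
          rw [sum_comm]
          apply sum_congr rfl
          intro k _
          rw [← mul_sum, sum_filter]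
  rw [h1]
  have h2 : ∀ P ∈ irrS K n, ∑ k ∈ Icc 1 n, (P.natDegree : ℂ) * ∑ g ∈ monS K n with P ^ k ∣ g, lam g
      = ∑ m ∈ Icc 1 n, (if P.natDegree ∣ m then
        (P.natDegree : ℂ) * lam P ^ (m / P.natDegree) else 0) * aL lam (n - m) := by
    intro P hP
    obtain ⟨hm, hle, hirr⟩ := mem_irrS.mp hP
    have hpos := hirr.natDegree_pos
    have h3 : ∀ k ∈ Icc 1 n, (P.natDegree : ℂ) * ∑ g ∈ monS K n with P ^ k ∣ g, lam g =
        if k * P.natDegree ≤ n then (P.natDegree : ℂ) * lam P ^ k * aL lam (n - k * P.natDegree)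
        else 0 := by
      intro k _
      split_ifs with h
      · rw [sum_dvd_eq lam n (P ^ k) (hm.pow k) (by rw [natDegree_pow]; exact h), map_pow,
          natDegree_pow, mul_assoc]
      · rw [sum_dvd_eq_zero lam n (P ^ k) (by rw [natDegree_pow]; omega), mul_zero]
    rw [sum_congr rfl h3, ← sum_filter]
    simp only [ite_mul, zero_mul]
    rw [← sum_filter]
    apply sum_bij (fun k _ => k * P.natDegree)
    · intro k hk
      simp only [mem_filter, mem_Icc] at hk ⊢
      refine ⟨⟨?_, hk.2⟩, dvd_mul_left _ _⟩
      nlinarith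
    · intro a _ b _ hab
      exact Nat.eq_of_mul_eq_mul_right hpos hab
    · intro m hm
      simp only [mem_filter, mem_Icc] at hm
      obtain ⟨⟨h4, h5⟩, k, rfl⟩ := hm
      refine ⟨k, ?_, mul_comm _ _⟩
      simp only [mem_filter, mem_Icc]
      have hk : 1 ≤ k := by
        rcases Nat.eq_zero_or_pos k with h | h
        · subst h; simp at h4
        · exact h
      refine ⟨⟨hk, ?_⟩, by rwa [mul_comm]⟩
      nlinarith
    · intro k _
      rw [Nat.mul_div_cancel _ hpos]
  rw [sum_congr rfl h2, sum_comm]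
  apply sum_congr rfl
  intro m hm
  rw [mem_Icc] at hm
  rw [← sum_mul]
  congr 1
  rw [sL]
  symm
  apply sum_subset
  · intro P hP
    obtain ⟨a, b, c⟩ := mem_irrS.mp hP
    exact mem_irrS.mpr ⟨a, by omega, c⟩
  · intro P hP hP'
    obtain ⟨a, b, c⟩ := mem_irrS.mp hP
    rw [if_neg]
    intro hd
    exact hP' (mem_irrS.mpr ⟨a, Nat.le_of_dvd hm.1 hd, c⟩)

lemma sL_eq {K F : Type*} [Field K] [Fintype K] [Field F] [Fintype F] [Algebra K F]
    (lam : K[X] →* ℂ) :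
    sL lam (Module.finrank K F) =
      ∑ x : F, lam (minpoly K x) ^ (Module.finrank K F / (minpoly K x).natDegree) := by
  classical
  have : FiniteDimensional K F := Module.Finite.of_finite
  have hmem : ∀ x : F, minpoly K x ∈ irrS K (Module.finrank K F) := fun x =>
    mem_irrS.mpr ⟨minpoly.monic (IsIntegral.of_finite K x), minpoly.natDegree_le x,
      minpoly.irreducible (IsIntegral.of_finite K x)⟩
  rw [← sum_fiberwise_of_maps_to (g := fun x : F => minpoly K x)
    (t := irrS K (Module.finrank K F)) (fun x _ => hmem x), sL]
  apply sum_congr rfl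
  intro P hP
  obtain ⟨a, b, c⟩ := mem_irrS.mp hP
  have h1 : ∑ x : F with minpoly K x = P,
      lam (minpoly K x) ^ (Module.finrank K F / (minpoly K x).natDegree) =
      #{x : F | minpoly K x = P} * lam P ^ (Module.finrank K F / P.natDegree) := by
    rw [← nsmul_eq_mul, ← sum_const]
    apply sum_congr rfl
    intro x hx
    rw [(mem_filter.mp hx).2]
  rw [h1]
  split_ifs with h
  · rw [card_minpoly_eq P c a h]
  · rw [filter_eq_empty_iff.mpr]
    · simp
    · rintro x _ rfl
      exact h (minpoly.degree_dvd (IsIntegral.of_finite K x))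

end LF2


section PS
open Polynomial

lemma pow_bdd_le_one {D : ℕ} (z : Fin D → ℂ) (C : ℝ) (s0 : ℕ)
    (h : ∀ s, s0 ≤ s → ‖∑ i, z i ^ s‖ ≤ C) (i : Fin D) : ‖z i‖ ≤ 1 := by
  classical
  by_contra hlt
  push Not at hlt
  set V := (univ.image z).erase (z i) with hV
  set l : ℂ[X] := ∏ v ∈ V, (X - Polynomial.C v) with hl
  have hl0 : l.eval (z i) ≠ 0 := by
    rw [hl, eval_prod, prod_ne_zero_iff]
    intro v hv
    simp only [eval_sub, eval_X, eval_C]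
    exact sub_ne_zero.mpr (fun h => (mem_erase.mp hv).1 h.symm)
  have hl1 : ∀ j, z j ≠ z i → l.eval (z j) = 0 := by
    intro j hj
    rw [hl, eval_prod]
    apply prod_eq_zero (i := z j) (mem_erase.mpr ⟨hj, mem_image_of_mem _ (mem_univ _)⟩)
    simp
  have key : ∀ s, ∑ j, l.eval (z j) * z j ^ s = (#{j | z j = z i} : ℂ) * (l.eval (z i) * z i ^ s) := by
    intro s
    rw [← nsmul_eq_mul, ← sum_const, sum_filter]
    apply sum_congr rfl
    intro j _
    split_ifs with hj
    · rw [hj]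
    · rw [hl1 j hj, zero_mul]
  have key2 : ∀ s, ∑ j, l.eval (z j) * z j ^ s = ∑ k ∈ range (l.natDegree + 1), l.coeff k * ∑ j, z j ^ (s + k) := by
    intro s
    simp only [eval_eq_sum_range, sum_mul, mul_sum]
    rw [sum_comm]
    apply sum_congr rfl; intro k _
    apply sum_congr rfl; intro j _
    ring
  have hm : 1 ≤ (#{j | z j = z i} : ℝ) := by
    exact_mod_cast card_pos.mpr ⟨i, by simp⟩
  have bd : ∀ s, s0 ≤ s → ‖l.eval (z i)‖ * ‖z i‖ ^ s ≤ ∑ k ∈ range (l.natDegree + 1), ‖l.coeff k‖ * C := by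
    intro s hs
    have h1 : ‖∑ j, l.eval (z j) * z j ^ s‖ ≤ ∑ k ∈ range (l.natDegree + 1), ‖l.coeff k‖ * C := by
      rw [key2]
      refine (norm_sum_le _ _).trans (sum_le_sum fun k _ => ?_)
      rw [norm_mul]
      gcongr
      exact h _ (by omega)
    rw [key, norm_mul, norm_mul, norm_pow, Complex.norm_natCast] at h1
    refine le_trans ?_ h1
    have : 0 ≤ ‖l.eval (z i)‖ * ‖z i‖ ^ s := by positivity
    nlinarith
  have ht := tendsto_pow_atTop_atTop_of_one_lt hlt
  have hpos : 0 < ‖l.eval (z i)‖ := norm_pos_iff.mpr hl0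
  obtain ⟨s, hs1, hs2⟩ := ((ht.eventually_gt_atTop ((∑ k ∈ range (l.natDegree + 1), ‖l.coeff k‖ * C) / ‖l.eval (z i)‖)).and (Filter.eventually_ge_atTop s0)).exists
  have := bd s hs2
  rw [div_lt_iff₀ hpos] at hs1
  linarith

lemma newton_roots (a s : ℕ → ℂ) (D : ℕ) (ha0 : a 0 = 1) (haD : ∀ n, D < n → a n = 0)
    (hN : ∀ n : ℕ, (n : ℂ) * a n = ∑ m ∈ Icc 1 n, s m * a (n - m)) :
    ∃ ω : Fin D → ℂ, ∀ m, 1 ≤ m → s m = - ∑ i, ω i ^ m := by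
  set R : ℂ[X] := ∑ n ∈ range (D + 1), Polynomial.C (a n) * X ^ (D - n) with hR
  have hcoef : ∀ n, n ≤ D → R.coeff (D - n) = a n := by
    intro n hn
    rw [hR, finsetSum_coeff, sum_eq_single n]
    · simp
    · intro b hb hbn
      rw [coeff_C_mul_X_pow, if_neg]
      have := mem_range.mp hb
      omega
    · intro h; simp at h; omega
  have hRdeg : R.natDegree ≤ D := by
    rw [hR]
    apply natDegree_sum_le_of_forall_le
    intro i _
    exact (natDegree_C_mul_X_pow_le _ _).trans (by omega)
  have hRmonic : R.Monic := by
    apply monic_of_natDegree_le_of_coeff_eq_one D hRdeg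
    have := hcoef 0 (by omega)
    simpa [ha0] using this
  have hRD : R.natDegree = D := by
    apply le_antisymm hRdeg
    apply le_natDegree_of_ne_zero
    have := hcoef 0 (by omega)
    simp [ha0] at this
    simp [this]
  have hsplit : R.Splits := IsAlgClosed.splits R
  have hcard : R.roots.card = D := by rw [← hRD]; exact hsplit.natDegree_eq_card_roots.symm
  obtain ⟨ω, hω⟩ : ∃ ω : Fin D → ℂ, univ.val.map ω = R.roots := by
    have hl : R.roots.toList.length = D := by simp [hcard]
    refine ⟨fun i => R.roots.toList.get (i.cast hl.symm), ?_⟩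
    rw [Fin.univ_val_map]
    have : List.ofFn (fun i : Fin D => R.roots.toList.get (i.cast hl.symm)) = R.roots.toList := by
      apply List.ext_get
      · simp [hcard]
      · intro n h1 h2; simp
    rw [this]; simp
  refine ⟨ω, ?_⟩
  have ha : ∀ n, a n = (-1)^n * MvPolynomial.aeval ω (MvPolynomial.esymm (Fin D) ℂ n) := by
    intro n
    rw [MvPolynomial.aeval_esymm_eq_multiset_esymm, hω]
    by_cases hn : n ≤ D
    · rw [← hcoef n hn, coeff_eq_esymm_roots_of_card (by rw [hcard, hRD]) (by rw [hRD]; omega),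
        hRmonic.leadingCoeff, hRD, one_mul]
      rw [show D - (D - n) = n by omega]
    · rw [haD n (by omega), Multiset.esymm, Multiset.powersetCard_eq_empty _ (by rw [hcard]; omega)]
      simp
  set q : ℕ → ℂ := fun m => ∑ i, ω i ^ m with hq
  have hpq : ∀ m, MvPolynomial.aeval ω (MvPolynomial.psum (Fin D) ℂ m) = q m := by
    intro m; simp [MvPolynomial.psum, hq]
  have hN2 : ∀ n : ℕ, (n : ℂ) * a n = ∑ m ∈ Icc 1 n, (- q m) * a (n - m) := by
    intro n
    have h := congrArg (MvPolynomial.aeval ω) (MvPolynomial.mul_esymm_eq_sum (Fin D) ℂ n)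
    simp only [map_mul, map_sum, map_pow, map_neg, map_one, map_natCast, hpq] at h
    have h2 : (n:ℂ) * a n = - ∑ x ∈ antidiagonal n with x.1 < n, a x.1 * q x.2 := by
      rw [ha n]
      calc _ = (-1)^n * ((n:ℂ) * MvPolynomial.aeval ω (MvPolynomial.esymm (Fin D) ℂ n)) := by ring
        _ = _ := by
          rw [h, ← mul_assoc, ← pow_add, show n + (n+1) = 2*n+1 by ring, pow_succ, pow_mul]
          simp only [ha]
          simp
    rw [h2, ← sum_neg_distrib]
    symm
    apply sum_bij (fun m _ => (n - m, m))
    · intro m hm; simp at hm ⊢; omega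
    · intro m hm m' hm' h; simp at h; exact h.2
    · rintro ⟨x, y⟩ hxy
      simp at hxy
      exact ⟨y, by simp; omega, by ext <;> simp; omega⟩
    · intro m hm; simp; ring
  intro m
  induction m using Nat.strong_induction_on with
  | _ m ih =>
    intro hm
    have h1 := (hN m).symm.trans (hN2 m)
    have hI : Icc 1 m = insert m (Icc 1 (m-1)) := by ext x; simp; omega
    have hnot : m ∉ Icc 1 (m-1) := by simp; omega
    rw [hI, sum_insert hnot, sum_insert hnot] at h1
    simp only [Nat.sub_self, ha0, mul_one] at h1
    have h3 : ∑ x ∈ Icc 1 (m-1), s x * a (m - x) = ∑ x ∈ Icc 1 (m-1), (- q x) * a (m - x) := by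
      apply sum_congr rfl; intro x hx
      simp at hx
      rw [ih x (by omega) hx.1]
    rw [h3] at h1
    exact add_right_cancel h1

lemma weil_analytic (a s : ℕ → ℂ) (D : ℕ) (ha0 : a 0 = 1) (haD : ∀ n, D < n → a n = 0)
    (hN : ∀ n : ℕ, (n : ℂ) * a n = ∑ m ∈ Icc 1 n, s m * a (n - m))
    (p : ℝ) (hp : 0 < p) (C : ℝ) (s0 : ℕ) (h : ∀ j, s0 ≤ j → ‖s (2*j)‖ ≤ C * p^j) :
    ‖s 1‖ ≤ D * √p := by
  obtain ⟨ω, hω⟩ := newton_roots a s D ha0 haD hN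
  have hz : ∀ i, ‖ω i ^ 2 / p‖ ≤ 1 := by
    apply pow_bdd_le_one (fun i => ω i ^ 2 / (p:ℂ)) C (s0 + 1)
    intro j hj
    have h1 := h j (by omega)
    rw [hω _ (by omega), norm_neg] at h1
    have : ∑ i, (ω i ^ 2 / (p:ℂ))^j = (∑ i, ω i ^ (2*j)) / (p:ℂ)^j := by
      rw [sum_div]; apply sum_congr rfl; intro i _; rw [div_pow, pow_mul]
    rw [this, norm_div, norm_pow, Complex.norm_real, Real.norm_of_nonneg hp.le, div_le_iff₀ (by positivity)]
    exact h1
  have hw : ∀ i, ‖ω i‖ ≤ √p := by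
    intro i
    have := hz i
    rw [norm_div, norm_pow, Complex.norm_real, Real.norm_of_nonneg hp.le, div_le_one hp] at this
    exact Real.le_sqrt_of_sq_le this
  rw [hω 1 le_rfl, norm_neg]
  refine (norm_sum_le _ _).trans ?_
  refine (sum_le_sum (g := fun _ => √p) fun i _ => by simpa using hw i).trans ?_
  simp
end PS


section WL
open Polynomial
variable {p : ℕ} [Fact p.Prime]

noncomputable def lamW (χ : MulChar (ZMod p) ℂ) (S : Finset (ZMod p)) (e : ZMod p → ℕ) :
    (ZMod p)[X] →* ℂ where
  toFun g := ∏ a ∈ S, χ (g.eval a) ^ e a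
  map_one' := by simp
  map_mul' g h := by simp [mul_pow, prod_mul_distrib]

lemma lamW_apply (χ : MulChar (ZMod p) ℂ) (S : Finset (ZMod p)) (e : ZMod p → ℕ) (g : (ZMod p)[X]) :
    lamW χ S e g = ∏ a ∈ S, χ (g.eval a) ^ e a := rfl

lemma aL_zero {K : Type*} [Field K] [Fintype K] (lam : K[X] →* ℂ) : aL lam 0 = 1 := by
  have : monS K 0 = {1} := by
    ext g
    rw [mem_monS, mem_singleton]
    constructor
    · rintro ⟨h1, h2⟩; exact h1.natDegree_eq_zero.mp h2
    · rintro rfl; simp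
  rw [aL, this]; simp

lemma aL_lamW (χ : MulChar (ZMod p) ℂ) (hχ : χ ≠ 1) (S : Finset (ZMod p)) (e : ZMod p → ℕ)
    (a0 : ZMod p) (h0 : a0 ∈ S) (he : e a0 = 1) (n : ℕ) (hn : #S ≤ n) :
    aL (lamW χ S e) n = 0 := by
  set l : (ZMod p)[X] := ∏ v ∈ S.erase a0, (X - Polynomial.C v) with hl
  have hdeg : l.natDegree < n := by
    rw [hl, natDegree_prod_of_monic _ _ (fun v _ => monic_X_sub_C v)]
    simp only [natDegree_X_sub_C, sum_const, card_erase_of_mem h0]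
    have := card_pos.mpr ⟨a0, h0⟩
    simp; omega
  have hl0 : l.eval a0 ≠ 0 := by
    rw [hl, eval_prod, prod_ne_zero_iff]
    intro v hv
    simp only [eval_sub, eval_X, eval_C]
    exact sub_ne_zero.mpr (fun h => (mem_erase.mp hv).1 h.symm)
  have hl1 : ∀ a ∈ S.erase a0, l.eval a = 0 := by
    intro a ha
    rw [hl, eval_prod]
    exact prod_eq_zero ha (by simp)
  have hshift : ∀ c : ZMod p, ∀ g ∈ monS (ZMod p) n, g + Polynomial.C c * l ∈ monS (ZMod p) n := by
    intro c g hg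
    obtain ⟨h1, h2⟩ := mem_monS.mp hg
    have hlt : (Polynomial.C c * l).natDegree < g.natDegree := by
      rw [h2]; exact (natDegree_C_mul_le _ _).trans_lt hdeg
    rw [mem_monS]
    exact ⟨h1.add_of_left (degree_lt_degree hlt), by rw [natDegree_add_eq_left_of_natDegree_lt hlt, h2]⟩
  have hinv : ∀ c : ZMod p, ∑ g ∈ monS (ZMod p) n, lamW χ S e (g + Polynomial.C c * l) = aL (lamW χ S e) n := by
    intro c
    rw [aL]
    apply sum_bij' (fun g _ => g + Polynomial.C c * l) (fun g _ => g + Polynomial.C (-c) * l)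
    · exact hshift c
    · exact hshift (-c)
    · intro g _; simp
    · intro g _; simp
    · intro g _; rfl
  have hsum : ∑ c : ZMod p, ∑ g ∈ monS (ZMod p) n, lamW χ S e (g + Polynomial.C c * l) = 0 := by
    rw [sum_comm]
    apply sum_eq_zero
    intro g _
    have : ∀ c : ZMod p, lamW χ S e (g + Polynomial.C c * l) =
        (∏ a ∈ S.erase a0, χ (g.eval a) ^ e a) * χ (g.eval a0 + c * l.eval a0) := by
      intro c
      rw [lamW_apply, ← mul_prod_erase _ _ h0, he, mul_comm]
      congr 1
      · apply prod_congr rfl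
        intro a ha
        simp [hl1 a ha]
      · simp
    simp only [this]
    rw [← mul_sum]
    have h3 : ∑ c : ZMod p, χ (g.eval a0 + c * l.eval a0) = ∑ v : ZMod p, χ v :=
      Fintype.sum_equiv ((Equiv.mulRight₀ _ hl0).trans (Equiv.addLeft (g.eval a0))) _ _ (fun c => by simp)
    rw [h3, MulChar.sum_eq_zero_of_ne_one hχ, mul_zero]
  simp only [hinv] at hsum
  simp only [sum_const, card_univ, ZMod.card, nsmul_eq_mul, mul_eq_zero, Nat.cast_eq_zero] at hsum
  exact hsum.resolve_left (Fact.out : p.Prime).ne_zero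

lemma sL_lamW (χ : MulChar (ZMod p) ℂ) (S : Finset (ZMod p)) (e : ZMod p → ℕ)
    (F : Type) [Field F] [Fintype F] [Algebra (ZMod p) F] :
    sL (lamW χ S e) (Module.finrank (ZMod p) F) =
      ∑ x : F, ∏ a ∈ S, χ (Algebra.norm (ZMod p) (algebraMap (ZMod p) F a - x)) ^ e a := by
  have : FiniteDimensional (ZMod p) F := Module.Finite.of_finite
  rw [sL_eq]
  apply sum_congr rfl
  intro x _
  rw [lamW_apply, ← prod_pow]
  apply prod_congr rfl
  intro a _
  rw [norm_sub_eq, map_pow, ← pow_mul, ← pow_mul, mul_comm]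

lemma weil_bound (χ : MulChar (ZMod p) ℂ) (hχ : χ ≠ 1) (S : Finset (ZMod p)) (e : ZMod p → ℕ)
    (a0 : ZMod p) (h0 : a0 ∈ S) (he : e a0 = 1) :
    ‖∑ x : ZMod p, ∏ a ∈ S, χ (a - x) ^ e a‖ ≤ #S * √(p:ℝ) := by
  have hp : p.Prime := Fact.out
  have h1 : sL (lamW χ S e) 1 = ∑ x : ZMod p, ∏ a ∈ S, χ (a - x) ^ e a := by
    have := sL_lamW χ S e (ZMod p)
    rw [Module.finrank_self] at this
    rw [this]
    simp [Algebra.norm_self]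
  rw [← h1]
  set G : (ZMod p)[X] := ∏ a ∈ S.erase a0, (X + Polynomial.C (a - a0)) ^ e a with hG
  have hG0 : G.eval 0 ≠ 0 := by
    rw [hG, eval_prod, prod_ne_zero_iff]
    intro a ha
    rw [eval_pow]
    apply pow_ne_zero
    simp only [eval_add, eval_X, eval_C, zero_add]
    exact sub_ne_zero.mpr (mem_erase.mp ha).1
  obtain ⟨C, s0, hC⟩ := charsum_ext χ hχ G hG0
  apply weil_analytic (aL (lamW χ S e)) (sL (lamW χ S e)) (#S) (aL_zero _)
    (fun n hn => aL_lamW χ hχ S e a0 h0 he n hn.le) (newton_L _) p (by exact_mod_cast hp.pos) C (s0+1)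
  intro j hj
  letI : Fintype (GaloisField p (2*j)) := Fintype.ofFinite _
  have hcard : Fintype.card (GaloisField p (2*j)) = p^(2*j) := by
    rw [← Nat.card_eq_fintype_card]; exact GaloisField.card p _ (by omega)
  have := hC j (by omega) (GaloisField p (2*j)) hcard
  have h2 := sL_lamW χ S e (GaloisField p (2*j))
  rw [GaloisField.finrank p (by omega)] at h2
  rw [h2]
  refine le_trans (le_of_eq ?_) this
  congr 1
  apply Fintype.sum_equiv (Equiv.subLeft (algebraMap (ZMod p) _ a0))
  intro x
  simp only [Equiv.subLeft_apply]
  rw [hG]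
  simp only [map_mul, map_prod, map_pow, map_add, aeval_X, aeval_C]
  rw [← mul_prod_erase _ _ h0, he, pow_one]
  congr 1
  apply prod_congr rfl
  intro a _
  simp
end WL


section MM
variable {p : ℕ} [Fact p.Prime]

lemma chi_norm_le (χ : MulChar (ZMod p) ℂ) (x : ZMod p) : ‖χ x‖ ≤ 1 :=
  DirichletCharacter.norm_le_one χ x

lemma chi_norm_eq (χ : MulChar (ZMod p) ℂ) (x : ZMod p) (hx : x ≠ 0) : ‖χ x‖ = 1 := by
  have := DirichletCharacter.unit_norm_eq_one χ (Units.mk0 x hx)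
  simpa using this

lemma star_chi (χ : MulChar (ZMod p) ℂ) (x : ZMod p) : star (χ x) = χ x ^ (2 * p - 3) := by
  have hp : 2 ≤ p := (Fact.out : p.Prime).two_le
  by_cases hx : x = 0
  · subst hx
    rw [MulChar.map_zero, zero_pow (by omega), star_zero]
  · have h1 := chi_norm_eq χ x hx
    have h2 : χ x ^ (p - 1) = 1 := by
      rw [← map_pow, ZMod.pow_card_sub_one_eq_one hx, map_one]
    have h3 : χ x * star (χ x) = 1 := by
      have := Complex.mul_conj (χ x)
      rw [Complex.normSq_eq_norm_sq, h1] at this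
      simpa using this
    have h4 : χ x * χ x ^ (2*p-3) = 1 := by
      rw [← pow_succ', show 2*p-3+1 = (p-1)*2 by omega, pow_mul, h2, one_pow]
    have h5 : χ x ≠ 0 := by intro h; rw [h] at h3; simp at h3
    exact mul_left_cancel₀ h5 (h3.trans h4.symm)

lemma weil_fin (χ : MulChar (ZMod p) ℂ) (hχ : χ ≠ 1) {ι : Type*} [Fintype ι] [DecidableEq ι]
    (t : ι → ZMod p) (ε : ι → ℕ) (i0 : ι) (h1 : ε i0 = 1) (h2 : ∀ i, t i = t i0 → i = i0) :
    ‖∑ z : ZMod p, ∏ i, χ (z + t i) ^ ε i‖ ≤ Fintype.card ι * √(p:ℝ) := by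
  set S := univ.image t
  set e : ZMod p → ℕ := fun a => ∑ i with t i = a, ε i
  have he : e (t i0) = 1 := by
    have : ({i | t i = t i0} : Finset ι) = {i0} := by
      ext i; simp; exact ⟨h2 i, fun h => by rw [h]⟩
    simp only [e]
    rw [this]; simp [h1]
  have hw := weil_bound χ hχ S e (t i0) (mem_image_of_mem _ (mem_univ _)) he
  have heq : ∑ z : ZMod p, ∏ i, χ (z + t i) ^ ε i = ∑ x : ZMod p, ∏ a ∈ S, χ (a - x) ^ e a := by
    apply Fintype.sum_equiv (Equiv.neg (ZMod p))
    intro z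
    rw [← prod_fiberwise_of_maps_to (g := t) (t := S) (fun i _ => mem_image_of_mem _ (mem_univ _))]
    apply prod_congr rfl
    intro a _
    simp only [e]
    rw [← prod_pow_eq_pow_sum]
    apply prod_congr rfl
    intro i hi
    rw [← (mem_filter.mp hi).2]
    simp [add_comm]
  rw [heq]
  refine hw.trans ?_
  gcongr
  exact card_image_le

/-- the twisted product -/
noncomputable def Gm (χ : MulChar (ZMod p) ℂ) (r : ℕ) (t : Fin r ⊕ Fin r → ℕ) (z : ZMod p) : ℂ :=
  (∏ i, χ (z + t (Sum.inl i))) * ∏ i, star (χ (z + t (Sum.inr i)))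

noncomputable def Sg (χ : MulChar (ZMod p) ℂ) (H : ℕ) (z1 z2 : ZMod p) : ℂ :=
  ∑ t ∈ Icc 1 H, χ (z1 + t) * star (χ (z2 + t))

lemma Gm_trivial (χ : MulChar (ZMod p) ℂ) (r : ℕ) (t : Fin r ⊕ Fin r → ℕ) :
    ‖∑ z, Gm χ r t z‖ ≤ p := by
  refine (norm_sum_le _ _).trans ?_
  refine (sum_le_sum (g := fun _ => 1) fun z _ => ?_).trans (by simp [ZMod.card])
  rw [Gm, norm_mul, norm_prod, norm_prod]
  apply mul_le_one₀
  · exact prod_le_one (fun _ _ => norm_nonneg _) (fun _ _ => chi_norm_le _ _)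
  · positivity
  · exact prod_le_one (fun _ _ => norm_nonneg _) (fun _ _ => by rw [norm_star]; exact chi_norm_le _ _)

lemma Gm_weil (χ : MulChar (ZMod p) ℂ) (hχ : χ ≠ 1) (r H : ℕ) (hH : H < p) (t : Fin r ⊕ Fin r → ℕ)
    (ht : ∀ i, t i ∈ Icc 1 H) (i0 : Fin r ⊕ Fin r) (h2 : ∀ i, t i = t i0 → i = i0) :
    ‖∑ z, Gm χ r t z‖ ≤ 2 * r * √(p:ℝ) := by
  have h2' : ∀ i, (t i : ZMod p) = t i0 → i = i0 := by
    intro i hi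
    apply h2
    have a1 := mem_Icc.mp (ht i)
    have a2 := mem_Icc.mp (ht i0)
    have := (ZMod.natCast_eq_natCast_iff' _ _ _).mp hi
    rwa [Nat.mod_eq_of_lt (by omega), Nat.mod_eq_of_lt (by omega)] at this
  have hc : ((Fintype.card (Fin r ⊕ Fin r) : ℕ) : ℝ) = 2 * r := by simp; ring
  rw [← hc]
  rcases i0 with i0 | i0
  · have := weil_fin χ hχ (fun i => (t i : ZMod p)) (Sum.elim (fun _ => 1) (fun _ => 2*p-3)) (Sum.inl i0)
      (by simp) h2'
    refine le_trans (le_of_eq ?_) this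
    congr 1
    apply sum_congr rfl
    intro z _
    rw [Fintype.prod_sum_type, Gm]
    simp [star_chi]
  · have := weil_fin χ hχ (fun i => (t i : ZMod p)) (Sum.elim (fun _ => 2*p-3) (fun _ => 1)) (Sum.inr i0)
      (by simp) h2'
    refine le_trans (le_of_eq ?_) this
    rw [← norm_star, star_sum]
    congr 1
    apply sum_congr rfl
    intro z _
    rw [Fintype.prod_sum_type, Gm]
    simp only [star_mul', star_prod, star_star]
    simp [star_chi]

open Classical in
lemma bad_count (r H : ℕ) (hr : 1 ≤ r) :
    #{t ∈ Fintype.piFinset (fun _ : Fin r ⊕ Fin r => Icc 1 H) | ∀ i0, ∃ i, t i = t i0 ∧ i ≠ i0}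
      ≤ r ^ (2 * r) * H ^ r := by
  have hsub : {t ∈ Fintype.piFinset (fun _ : Fin r ⊕ Fin r => Icc 1 H) | ∀ i0, ∃ i, t i = t i0 ∧ i ≠ i0}
      ⊆ ((univ : Finset (Fin r ⊕ Fin r → Fin r)) ×ˢ Fintype.piFinset (fun _ : Fin r => Icc 1 H)).image
        (fun q => q.2 ∘ q.1) := by
    intro t ht
    rw [mem_filter, Fintype.mem_piFinset] at ht
    obtain ⟨h1, h2⟩ := ht
    have hcard : #(univ.image t) ≤ r := by
      have h3 := card_eq_sum_card_image t (univ : Finset (Fin r ⊕ Fin r))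
      have h4 : #(univ.image t) • 2 ≤ ∑ b ∈ univ.image t, #{a | t a = b} := by
        apply card_nsmul_le_sum
        intro b hb
        obtain ⟨i0, _, rfl⟩ := mem_image.mp hb
        obtain ⟨i, hi, hne⟩ := h2 i0
        exact one_lt_card.mpr ⟨i, by simp [hi], i0, by simp, hne⟩
      rw [← h3] at h4
      simp at h4
      omega
    obtain ⟨emb⟩ : Nonempty (univ.image t ↪ Fin r) :=
      Function.Embedding.nonempty_of_card_le (by simpa using hcard)
    set σ : Fin r ⊕ Fin r → Fin r := fun i => emb ⟨t i, mem_image_of_mem _ (mem_univ _)⟩ with hσ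
    have hfac : Function.FactorsThrough t σ := by
      intro i i' h
      have := emb.injective h
      simpa using this
    set i00 : Fin r ⊕ Fin r := Sum.inl ⟨0, hr⟩
    rw [mem_image]
    refine ⟨(σ, Function.extend σ t (fun _ => t i00)), ?_, ?_⟩
    · rw [mem_product]
      refine ⟨mem_univ _, ?_⟩
      rw [Fintype.mem_piFinset]
      intro j
      simp only [Function.extend]
      split_ifs
      · exact h1 _
      · exact h1 _
    · funext i
      simp only [Function.comp_apply]
      exact hfac.extend_apply (fun _ => t i00) i
  refine (card_le_card hsub).trans (card_image_le.trans ?_)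
  rw [card_product, Fintype.card_piFinset]
  simp [two_mul]

lemma moment_bound (χ : MulChar (ZMod p) ℂ) (hχ : χ ≠ 1) (r H : ℕ) (hr : 1 ≤ r) (hH : H < p) :
    ∑ z1 : ZMod p, ∑ z2 : ZMod p, ‖Sg χ H z1 z2‖ ^ (2 * r) ≤
      (r:ℝ) ^ (2 * r) * H ^ r * p ^ 2 + (2 * r) ^ 2 * p * H ^ (2 * r) := by
  classical
  set T := Fintype.piFinset (fun _ : Fin r ⊕ Fin r => Icc 1 H) with hT
  have hexp : ∀ z1 z2 : ZMod p, ((‖Sg χ H z1 z2‖ ^ (2 * r) : ℝ) : ℂ) =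
      ∑ t ∈ T, Gm χ r t z1 * star (Gm χ r t z2) := by
    intro z1 z2
    have h1 : ((‖Sg χ H z1 z2‖ ^ (2 * r) : ℝ) : ℂ) = Sg χ H z1 z2 ^ r * star (Sg χ H z1 z2) ^ r := by
      rw [← mul_pow, pow_mul]
      push_cast
      congr 1
      exact (Complex.mul_conj' _).symm
    rw [h1]
    have h2 : Sg χ H z1 z2 ^ r * star (Sg χ H z1 z2) ^ r = ∏ i : Fin r ⊕ Fin r,
        ∑ t ∈ Icc 1 H, Sum.elim (fun _ : Fin r => χ (z1 + t) * star (χ (z2 + t)))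
          (fun _ => star (χ (z1 + t)) * χ (z2 + t)) i := by
      rw [Fintype.prod_sum_type]
      simp [Sg, star_sum]
    rw [h2, prod_univ_sum]
    apply sum_congr rfl
    intro t _
    rw [Fintype.prod_sum_type]
    simp only [Sum.elim_inl, Sum.elim_inr, Gm, star_mul', star_prod, star_star, prod_mul_distrib]
    ring
  have hid : ∑ z1 : ZMod p, ∑ z2 : ZMod p, ‖Sg χ H z1 z2‖ ^ (2 * r) =
      ∑ t ∈ T, ‖∑ z, Gm χ r t z‖ ^ 2 := by
    apply Complex.ofReal_injective
    rw [Complex.ofReal_sum]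
    simp only [Complex.ofReal_sum]
    simp only [hexp]
    calc ∑ z1, ∑ z2, ∑ t ∈ T, Gm χ r t z1 * star (Gm χ r t z2)
        = ∑ z1, ∑ t ∈ T, ∑ z2, Gm χ r t z1 * star (Gm χ r t z2) := by
          apply sum_congr rfl; intro _ _; rw [sum_comm]
      _ = ∑ t ∈ T, ∑ z1, ∑ z2, Gm χ r t z1 * star (Gm χ r t z2) := by rw [sum_comm]
      _ = _ := by
          apply sum_congr rfl; intro t _
          rw [← sum_mul_sum, ← star_sum]
          push_cast
          exact Complex.mul_conj' _
  rw [hid, ← sum_filter_add_sum_filter_not T (fun t => ∀ i0, ∃ i, t i = t i0 ∧ i ≠ i0)]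
  apply add_le_add
  · refine (sum_le_card_nsmul _ _ ((p:ℝ)^2) ?_).trans ?_
    · intro t _
      have := Gm_trivial χ r t
      gcongr
    · rw [nsmul_eq_mul]
      gcongr
      have := bad_count r H hr
      exact_mod_cast this
  · refine (sum_le_card_nsmul _ _ ((2*r:ℝ)^2 * p) ?_).trans ?_
    · intro t ht
      obtain ⟨h1, h2⟩ := mem_filter.mp ht
      push Not at h2
      obtain ⟨i0, h2⟩ := h2
      have := Gm_weil χ hχ r H hH t (Fintype.mem_piFinset.mp h1) i0 h2
      calc ‖∑ z, Gm χ r t z‖ ^ 2 ≤ (2 * r * √(p:ℝ))^2 := by gcongr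
        _ = _ := by rw [mul_pow, Real.sq_sqrt (by positivity)]
    · rw [nsmul_eq_mul, mul_comm]
      gcongr
      have : #T = H ^ (2*r) := by
        rw [hT, Fintype.card_piFinset]; simp [two_mul]
      have h2 := (card_filter_le T (fun t => ¬ ∀ i0, ∃ i, t i = t i0 ∧ i ≠ i0))
      rw [this] at h2
      exact_mod_cast h2
end MM


section DB

/-- divisor bound -/
lemma divisor_bound (ε : ℝ) (hε : 0 < ε) : ∃ C : ℝ, 1 ≤ C ∧ ∀ n : ℕ, n ≠ 0 →
    (#n.divisors : ℝ) ≤ C * (n:ℝ) ^ ε := by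
  classical
  -- constant for a fixed prime
  have hA : ∃ A : ℝ, 1 ≤ A ∧ ∀ q : ℕ, 2 ≤ q → ∀ k : ℕ, ((k + 1 : ℕ) : ℝ) ≤ A * ((q:ℝ) ^ ε) ^ k := by
    have h2 : 1 < (2:ℝ) ^ ε := Real.one_lt_rpow (by norm_num) hε
    refine ⟨1 + 1 / ((2:ℝ)^ε - 1), ?_, ?_⟩
    · have : 0 < 1 / ((2:ℝ)^ε - 1) := by apply one_div_pos.mpr; linarith
      linarith
    · intro q hq k
      set b := (2:ℝ)^ε
      have hb : 0 < b - 1 := by linarith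
      have h3 : 1 + (k:ℝ) * (b - 1) ≤ b ^ k := by
        have := one_add_mul_le_pow (a := b - 1) (by linarith) k
        simpa using this
      have h4 : b ≤ (q:ℝ)^ε := by
        apply Real.rpow_le_rpow (by norm_num) (by exact_mod_cast hq) hε.le
      have h5 : b ^ k ≤ ((q:ℝ)^ε)^k := by gcongr
      have h6 : (k:ℝ) ≤ (1 / (b - 1)) * b ^ k := by
        rw [one_div, inv_mul_eq_div, le_div_iff₀ hb]; linarith
      have h7 : 1 ≤ b ^ k := one_le_pow₀ h2.le
      have h8 : 0 < 1 / (b - 1) := by positivity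
      push_cast
      calc (k:ℝ) + 1 ≤ (1 / (b - 1)) * b ^ k + b^k := by linarith
        _ = (1 + 1 / (b - 1)) * b^k := by ring
        _ ≤ _ := by gcongr
  obtain ⟨A, hA1, hA⟩ := hA
  -- threshold
  obtain ⟨L, hL⟩ : ∃ L : ℕ, ∀ q : ℕ, L ≤ q → 2 ≤ (q:ℝ)^ε := by
    have := (tendsto_rpow_atTop hε).comp (tendsto_natCast_atTop_atTop (R := ℝ))
    obtain ⟨L, hL⟩ := Filter.eventually_atTop.mp (this.eventually_ge_atTop 2)
    exact ⟨L, fun q hq => hL q hq⟩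
  have hbig : ∀ q : ℕ, L ≤ q → ∀ k : ℕ, ((k + 1 : ℕ) : ℝ) ≤ ((q:ℝ) ^ ε) ^ k := by
    intro q hq k
    have h1 : ((k+1 : ℕ):ℝ) ≤ 2 ^ k := by exact_mod_cast Nat.lt_two_pow_self
    refine h1.trans ?_
    gcongr
    exact hL q hq
  refine ⟨A ^ L, one_le_pow₀ hA1, ?_⟩
  intro n hn
  rw [Nat.card_divisors hn]
  have hn2 : (n:ℝ)^ε = ∏ q ∈ n.primeFactors, ((q:ℝ)^ε) ^ (n.factorization q) := by
    conv_lhs => rw [← Nat.prod_factorization_pow_eq_self hn]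
    rw [Finsupp.prod, Nat.support_factorization]
    push_cast
    rw [← Real.finsetProd_rpow _ _ (fun i _ => by positivity)]
    apply prod_congr rfl
    intro q _
    rw [← Real.rpow_natCast, ← Real.rpow_natCast, ← Real.rpow_mul (by positivity),
      ← Real.rpow_mul (by positivity), mul_comm]
  rw [hn2]
  push_cast
  have hstep : ∏ q ∈ n.primeFactors, ((n.factorization q : ℝ) + 1) ≤
      ∏ q ∈ n.primeFactors, ((if q < L then A else 1) * ((q:ℝ)^ε) ^ (n.factorization q)) := by
    apply prod_le_prod
    · intro q _; positivity
    · intro q hq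
      split_ifs with h
      · have := hA q (Nat.prime_of_mem_primeFactors hq).two_le (n.factorization q)
        push_cast at this; exact this
      · have := hbig q (by omega) (n.factorization q)
        push_cast at this; rw [one_mul]; exact this
  refine hstep.trans ?_
  rw [prod_mul_distrib]
  gcongr
  rw [← prod_filter, prod_const]
  apply pow_le_pow_right₀ hA1
  calc _ ≤ #(range L) := card_le_card (fun q hq => by simp at hq ⊢; exact hq.2)
    _ = L := by simp
end DB


section EN

/-- quadruples (k,n,a,b) -/
def QQ (K N A B : ℕ) : Finset (ℕ × ℕ × ℕ × ℕ) :=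
  (Icc 1 K ×ˢ Icc 1 N ×ˢ Icc 1 A ×ˢ Icc 1 B).filter (fun q => q.1 * q.2.2.2 ≠ q.2.1 * q.2.2.1)

/-- numerator -/
def nu (m : ℕ) (q : ℕ × ℕ × ℕ × ℕ) : ℕ := q.1 + m * q.2.1
/-- denominator -/
def de (m : ℕ) (q : ℕ × ℕ × ℕ × ℕ) : ℕ := q.2.2.1 + m * q.2.2.2

lemma mem_QQ {K N A B : ℕ} {k n a b : ℕ} : (k,n,a,b) ∈ QQ K N A B ↔
    (1 ≤ k ∧ k ≤ K) ∧ (1 ≤ n ∧ n ≤ N) ∧ (1 ≤ a ∧ a ≤ A) ∧ (1 ≤ b ∧ b ≤ B) ∧ k * b ≠ n * a := by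
  simp [QQ, mem_filter, mem_product, mem_Icc]; tauto

lemma lin_count (K N A B M : ℕ) (q1 q2 : ℕ × ℕ × ℕ × ℕ) (h1 : q1 ∈ QQ K N A B) (h2 : q2 ∈ QQ K N A B) :
    #{x ∈ Icc 1 M ×ˢ Icc 1 M | nu x.1 q1 * de x.2 q2 = nu x.2 q2 * de x.1 q1} ≤ 2 * M := by
  obtain ⟨k1, n1, a1, b1⟩ := q1
  obtain ⟨k2, n2, a2, b2⟩ := q2
  rw [mem_QQ] at h1 h2
  obtain ⟨hk1, hn1, ha1, hb1, hne1⟩ := h1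
  obtain ⟨hk2, hn2, ha2, hb2, hne2⟩ := h2
  change #({x ∈ Icc 1 M ×ˢ Icc 1 M | (k1 + x.1 * n1) * (a2 + x.2 * b2) = (k2 + x.2 * n2) * (a1 + x.1 * b1)}) ≤ 2 * M
  set P := {x ∈ Icc 1 M ×ˢ Icc 1 M | (k1 + x.1 * n1) * (a2 + x.2 * b2) = (k2 + x.2 * n2) * (a1 + x.1 * b1)} with hP
  set D := {m ∈ Icc 1 M | (k1 + m * n1) * b2 = n2 * (a1 + m * b1)} with hD
  have hDc : #D ≤ 1 := by
    rw [card_le_one]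
    intro m hm m' hm'
    by_contra hmm
    have e1 := (mem_filter.mp hm).2
    have e2 := (mem_filter.mp hm').2
    zify at e1 e2 hne1
    have hmm' : (m:ℤ) - m' ≠ 0 := by intro h; apply hmm; omega
    have e3 : (n1:ℤ) * b2 = n2 * b1 := by
      apply mul_left_cancel₀ hmm'
      linear_combination e1 - e2
    have e4 : (k1:ℤ) * b2 = n2 * a1 := by linear_combination e1 - m * e3
    apply hne1
    have hb2' : (b2:ℤ) ≠ 0 := by omega
    apply mul_left_cancel₀ hb2'
    linear_combination b1 * e4 - a1 * e3
  rw [← card_filter_add_card_filter_not (s := P) (fun x => x.1 ∈ D), two_mul]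
  apply add_le_add
  · calc #{x ∈ P | x.1 ∈ D} ≤ #(D ×ˢ Icc 1 M) := by
          apply card_le_card
          intro x hx
          rw [mem_filter, hP, mem_filter, mem_product] at hx
          exact mem_product.mpr ⟨hx.2, hx.1.1.2⟩
      _ ≤ 1 * M := by rw [card_product]; simp; exact Nat.mul_le_of_le_div M _ _ (by
                      rcases Nat.eq_zero_or_pos M with h | h
                      · subst h; simp [hD]
                      · rw [Nat.div_self h]; exact hDc)
      _ = M := one_mul _
  · calc #{x ∈ P | x.1 ∉ D} ≤ #(Icc 1 M) := by
          apply card_le_card_of_injOn (fun x => x.1)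
          · intro x hx
            simp only [hP, coe_filter, mem_product, Set.mem_ofPred_eq, mem_filter] at hx
            exact hx.1.1.1
          · rintro ⟨m, u⟩ hx ⟨m', u'⟩ hx' h
            simp only at h
            subst h
            simp only [hP, hD, coe_filter, mem_product, Set.mem_ofPred_eq, mem_filter, not_and] at hx hx'
            have e1 := hx.1.2
            have e2 := hx'.1.2
            have e3 := hx.2 hx.1.1.1
            zify at e1 e2 e3
            have e3' := sub_ne_zero.mpr e3
            have : (u:ℤ) - u' = 0 := by
              apply (mul_eq_zero.mp _).resolve_left e3'
              linear_combination e1 - e2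
            simp; omega
      _ = M := by simp

lemma res_count (K N m x : ℕ) (hm : 1 ≤ m) :
    #{y ∈ Icc 1 K ×ˢ Icc 1 N | y.1 + m * y.2 = x} ≤ K / m + 1 := by
  calc _ ≤ #(range (K / m + 1)) := by
        apply card_le_card_of_injOn (fun y => (y.1 - 1) / m)
        · intro y hy
          simp only [coe_filter, mem_product, Set.mem_ofPred_eq, mem_Icc] at hy
          simp only [coe_range, Set.mem_Iio]
          have : (y.1 - 1) / m ≤ K / m := Nat.div_le_div_right (by omega)
          omega
        · rintro ⟨k, n⟩ hy ⟨k', n'⟩ hy' h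
          simp only [coe_filter, mem_product, Set.mem_ofPred_eq, mem_Icc] at hy hy' h
          have e : k + m * n = k' + m * n' := hy.2.trans hy'.2.symm
          have hmod : (k - 1) % m = (k' - 1) % m := by
            have : (k - 1 + m * n) % m = (k' - 1 + m * n') % m := by
              congr 1; omega
            simpa using this
          have h1 := Nat.div_add_mod (k-1) m
          have h2 := Nat.div_add_mod (k'-1) m
          rw [h, hmod] at h1
          have hk : k = k' := by omega
          subst hk
          have hn : m * n = m * n' := by omega
          have := Nat.eq_of_mul_eq_mul_left hm hn
          simp [this]
    _ = _ := by simp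

/-- first reduction set -/
def Y4 (K N A B M : ℕ) : Finset ((ℕ × ℕ) × (ℕ × ℕ × ℕ × ℕ) × (ℕ × ℕ × ℕ × ℕ)) :=
  ((Icc 1 M ×ˢ Icc 1 M) ×ˢ QQ K N A B ×ˢ QQ K N A B).filter
    (fun x => nu x.1.1 x.2.1 * de x.1.2 x.2.2 = nu x.1.2 x.2.2 * de x.1.1 x.2.1)

lemma mem_Y4 {K N A B M m1 m2 k1 n1 a1 b1 k2 n2 a2 b2 : ℕ} :
    ((m1, m2), (k1, n1, a1, b1), (k2, n2, a2, b2)) ∈ Y4 K N A B M ↔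
      ((1 ≤ m1 ∧ m1 ≤ M) ∧ (1 ≤ m2 ∧ m2 ≤ M)) ∧ (k1, n1, a1, b1) ∈ QQ K N A B ∧
        (k2, n2, a2, b2) ∈ QQ K N A B ∧
      (k1 + m1 * n1) * (a2 + m2 * b2) = (k2 + m2 * n2) * (a1 + m1 * b1) := by
  rw [Y4, mem_filter]
  simp only [mem_product, mem_Icc, nu, de]; tauto

lemma Y4_count (K N A B M Δ : ℕ)
    (hΔ : ∀ W, 0 < W → W ≤ (K + M * N) * (A + M * B) → #W.divisors ≤ Δ) :
    #(Y4 K N A B M) ≤ ∑ m1 ∈ Icc 1 M, ∑ m2 ∈ Icc 1 M, (K * N * A * B) * (Δ * ((K / m2 + 1) * (A / m1 + 1))) := by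
  set base := (Icc 1 M ×ˢ Icc 1 M) ×ˢ (Icc 1 K ×ˢ Icc 1 N ×ˢ Icc 1 A ×ˢ Icc 1 B) with hbase
  set f : (ℕ × ℕ) × (ℕ × ℕ × ℕ × ℕ) × (ℕ × ℕ × ℕ × ℕ) → (ℕ × ℕ) × (ℕ × ℕ × ℕ × ℕ) :=
    fun x => (x.1, (x.2.1.1, x.2.1.2.1, x.2.2.2.2.1, x.2.2.2.2.2)) with hf
  have hmaps : ∀ x ∈ Y4 K N A B M, f x ∈ base := by
    rintro ⟨⟨m1, m2⟩, ⟨k1, n1, a1, b1⟩, ⟨k2, n2, a2, b2⟩⟩ hx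
    simp only [Y4, mem_filter, mem_product, mem_QQ, mem_Icc] at hx
    simp only [hf, hbase, mem_product, mem_Icc]
    tauto
  rw [card_eq_sum_card_fiberwise hmaps]
  have hfib : ∀ y ∈ base, #{x ∈ Y4 K N A B M | f x = y} ≤ Δ * ((K / y.1.2 + 1) * (A / y.1.1 + 1)) := by
    rintro ⟨⟨m1, m2⟩, ⟨k1, n1, a2, b2⟩⟩ hy
    simp only [hbase, mem_product, mem_Icc] at hy
    set W := (k1 + m1 * n1) * (a2 + m2 * b2) with hW
    have hWpos : 0 < W := by
      apply Nat.mul_pos <;> omega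
    have hWle : W ≤ (K + M * N) * (A + M * B) := by
      apply Nat.mul_le_mul
      · exact Nat.add_le_add hy.2.1.2 (Nat.mul_le_mul hy.1.1.2 hy.2.2.1.2)
      · exact Nat.add_le_add hy.2.2.2.1.2 (Nat.mul_le_mul hy.1.2.2 hy.2.2.2.2.2)
    set s := {x ∈ Y4 K N A B M | f x = ((m1, m2), (k1, n1, a2, b2))} with hs
    have h1 : #s ≤ ((K / m2 + 1) * (A / m1 + 1)) * #(W.divisorsAntidiagonal) := by
      apply card_le_mul_card_image_of_maps_to (f := fun x => (nu x.1.2 x.2.2, de x.1.1 x.2.1))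
      · rintro ⟨⟨m1', m2'⟩, ⟨k1', n1', a1', b1'⟩, ⟨k2', n2', a2', b2'⟩⟩ hx
        simp only [hs, hf, mem_filter, mem_Y4, Prod.mk.injEq] at hx
        obtain ⟨⟨_, _, _, hx2⟩, ⟨rfl, rfl⟩, rfl, rfl, rfl, rfl⟩ := hx
        rw [Nat.mem_divisorsAntidiagonal]
        simp only [nu, de]
        exact ⟨hx2.symm, hWpos.ne'⟩
      · rintro ⟨u, v⟩ _
        calc _ ≤ #({y ∈ Icc 1 K ×ˢ Icc 1 N | y.1 + m2 * y.2 = u} ×ˢ {y ∈ Icc 1 A ×ˢ Icc 1 B | y.1 + m1 * y.2 = v}) := by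
              apply card_le_card_of_injOn (fun x => ((x.2.2.1, x.2.2.2.1), (x.2.1.2.2.1, x.2.1.2.2.2)))
              · rintro ⟨⟨m1', m2'⟩, ⟨k1', n1', a1', b1'⟩, ⟨k2', n2', a2', b2'⟩⟩ hx
                simp only [hs, hf, coe_filter, mem_filter, Set.mem_ofPred_eq, mem_Y4, mem_QQ, Prod.mk.injEq, nu, de] at hx
                obtain ⟨⟨⟨_, hx1, hx2, _⟩, ⟨rfl, rfl⟩, rfl, rfl, rfl, rfl⟩, rfl, rfl⟩ := hx
                simp only [coe_product, coe_filter, Set.mem_prod, Set.mem_ofPred_eq, mem_product, mem_Icc]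
                tauto
              · rintro ⟨⟨m1', m2'⟩, ⟨k1', n1', a1', b1'⟩, ⟨k2', n2', a2', b2'⟩⟩ hx ⟨⟨m1'', m2''⟩, ⟨k1'', n1'', a1'', b1''⟩, ⟨k2'', n2'', a2'', b2''⟩⟩ hx' h
                simp only [hs, hf, coe_filter, mem_filter, Set.mem_ofPred_eq, Prod.mk.injEq] at hx hx' h
                simp only [Prod.mk.injEq]
                omega
          _ ≤ _ := by
              rw [card_product]
              exact Nat.mul_le_mul (res_count _ _ _ _ (by omega)) (res_count _ _ _ _ (by omega))
    refine h1.trans ?_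
    rw [mul_comm]
    apply Nat.mul_le_mul_right
    have : #(W.divisorsAntidiagonal) = #W.divisors := by
      rw [← Nat.map_div_right_divisors, card_map]
    rw [this]
    exact hΔ W hWpos hWle
  refine (sum_le_sum hfib).trans ?_
  rw [hbase, sum_product, sum_product]
  apply le_of_eq
  apply sum_congr rfl; intro m1 _
  apply sum_congr rfl; intro m2 _
  simp only [sum_const]
  rw [card_product, card_product, card_product]
  simp [mul_assoc]

/-- index set -/
def I0 (K N A B M : ℕ) : Finset ((ℕ × ℕ) × (ℕ × ℕ × ℕ × ℕ)) :=
  (Icc 1 M ×ˢ Icc 1 M) ×ˢ QQ K N A B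

lemma energy_nat (K N A B M Δ : ℕ)
    (hΔ : ∀ W, 0 < W → W ≤ (K + M * N) * (A + M * B) → #W.divisors ≤ Δ) :
    #{x ∈ I0 K N A B M ×ˢ I0 K N A B M |
      nu x.1.1.1 x.1.2 * de x.2.1.1 x.2.2 = nu x.2.1.1 x.2.2 * de x.1.1.1 x.1.2 ∧
      nu x.1.1.2 x.1.2 * de x.2.1.2 x.2.2 = nu x.2.1.2 x.2.2 * de x.1.1.2 x.1.2} ≤
    2 * M * ∑ m1 ∈ Icc 1 M, ∑ m2 ∈ Icc 1 M, (K * N * A * B) * (Δ * ((K / m2 + 1) * (A / m1 + 1))) := by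
  refine le_trans ?_ (Nat.mul_le_mul_left _ (Y4_count K N A B M Δ hΔ))
  apply card_le_mul_card_image_of_maps_to (f := fun x => ((x.1.1.1, x.2.1.1), (x.1.2, x.2.2)))
  · rintro ⟨⟨⟨m1, m1'⟩, q1⟩, ⟨⟨m2, m2'⟩, q2⟩⟩ hx
    simp only [I0, mem_filter, mem_product] at hx
    simp only [Y4, mem_filter, mem_product]
    tauto
  · rintro ⟨⟨m1, m2⟩, ⟨q1, q2⟩⟩ hy
    simp only [Y4, mem_filter, mem_product] at hy
    refine le_trans ?_ (lin_count K N A B M q1 q2 hy.1.2.1 hy.1.2.2)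
    apply card_le_card_of_injOn (fun x => (x.1.1.2, x.2.1.2))
    · rintro ⟨⟨⟨m1, m1'⟩, q1⟩, ⟨⟨m2, m2'⟩, q2⟩⟩ hx
      simp only [I0, coe_filter, mem_filter, Set.mem_ofPred_eq, mem_product, Prod.mk.injEq] at hx
      obtain ⟨hx, ⟨rfl, rfl⟩, rfl, rfl⟩ := hx
      simp only [coe_filter, Set.mem_ofPred_eq, mem_product]
      tauto
    · rintro ⟨⟨⟨u1, u1'⟩, q1⟩, ⟨⟨u2, u2'⟩, q2⟩⟩ hx ⟨⟨⟨v1, v1'⟩, s1⟩, ⟨⟨v2, v2'⟩, s2⟩⟩ hx' h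
      simp only [coe_filter, Set.mem_ofPred_eq, Prod.mk.injEq] at hx hx' h
      obtain ⟨_, ⟨rfl, rfl⟩, rfl, rfl⟩ := hx
      obtain ⟨_, ⟨rfl, rfl⟩, rfl, rfl⟩ := hx'
      simp only [Prod.mk.injEq]
      tauto

/-- Hoelder / Cauchy step -/
lemma holder_step {ι Z : Type*} [DecidableEq ι] [DecidableEq Z] [Fintype Z] (I : Finset ι) (z : ι → Z) (f : Z → ℝ)
    (hf : ∀ z, 0 ≤ f z) (r : ℕ) (hr : 1 ≤ r) :
    (∑ i ∈ I, f (z i)) ^ (2 * r) ≤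
      (#I : ℝ) ^ (2 * r - 2) * #{x ∈ I ×ˢ I | z x.1 = z x.2} * ∑ y, f y ^ (2 * r) := by
  obtain ⟨s, rfl⟩ : ∃ s, r = s + 1 := ⟨r - 1, by omega⟩
  have h1 : (∑ i ∈ I, f (z i)) ^ (s + 1) ≤ (#I : ℝ) ^ s * ∑ i ∈ I, f (z i) ^ (s + 1) :=
    pow_sum_le_card_mul_sum_pow (fun i _ => hf _) s
  have h2 : ∑ i ∈ I, f (z i) ^ (s + 1) = ∑ y, (#{i ∈ I | z i = y} : ℝ) * f y ^ (s + 1) := by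
    rw [← sum_fiberwise I z]
    apply sum_congr rfl; intro y _
    rw [← nsmul_eq_mul, ← sum_const]
    apply sum_congr rfl; intro i hi
    rw [(mem_filter.mp hi).2]
  have h3 : (∑ y, (#{i ∈ I | z i = y} : ℝ) * f y ^ (s + 1)) ^ 2 ≤
      (∑ y, (#{i ∈ I | z i = y} : ℝ) ^ 2) * ∑ y, (f y ^ (s + 1)) ^ 2 :=
    sum_mul_sq_le_sq_mul_sq _ _ _
  have h4 : ∑ y, (#{i ∈ I | z i = y} : ℝ) ^ 2 = #{x ∈ I ×ˢ I | z x.1 = z x.2} := by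
    rw [card_eq_sum_card_fiberwise (f := fun x => z x.1) (t := univ) (fun _ _ => mem_coe.mpr (mem_univ _))]
    push_cast
    apply sum_congr rfl; intro y _
    have : {a ∈ {x ∈ I ×ˢ I | z x.1 = z x.2} | z a.1 = y} = {i ∈ I | z i = y} ×ˢ {i ∈ I | z i = y} := by
      ext ⟨u, v⟩
      simp only [mem_filter, mem_product]
      constructor
      · rintro ⟨⟨⟨h1, h2⟩, h3⟩, h4⟩; exact ⟨⟨h1, h4⟩, h2, h3 ▸ h4⟩
      · rintro ⟨⟨h1, h2⟩, h3, h4⟩; exact ⟨⟨⟨h1, h3⟩, h2.trans h4.symm⟩, h2⟩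
    rw [this, card_product]
    push_cast; ring
  have h0 : 0 ≤ ∑ i ∈ I, f (z i) := sum_nonneg fun i _ => hf _
  calc (∑ i ∈ I, f (z i)) ^ (2 * (s + 1)) = ((∑ i ∈ I, f (z i)) ^ (s + 1)) ^ 2 := by
        rw [← pow_mul, mul_comm]
    _ ≤ ((#I : ℝ) ^ s * ∑ i ∈ I, f (z i) ^ (s + 1)) ^ 2 := by gcongr
    _ = (#I : ℝ) ^ (2 * s) * (∑ i ∈ I, f (z i) ^ (s + 1)) ^ 2 := by
        rw [mul_pow, ← pow_mul, mul_comm s 2]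
    _ ≤ (#I : ℝ) ^ (2 * s) * ((#{x ∈ I ×ˢ I | z x.1 = z x.2} : ℝ) * ∑ y, (f y ^ (s + 1)) ^ 2) := by
        rw [h2, ← h4]; gcongr
    _ = _ := by
        rw [show 2 * (s + 1) - 2 = 2 * s by omega, mul_assoc]
        simp only [← pow_mul, mul_comm (s+1) 2]
end EN


section CB

lemma shift1 (f : ℕ → ℂ) (hf : ∀ x, ‖f x‖ ≤ 1) (K s : ℕ) :
    ‖∑ k ∈ Icc 1 K, f k - ∑ k ∈ Icc 1 K, f (k + s)‖ ≤ 2 * s := by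
  induction s with
  | zero => simp
  | succ s ih =>
    have h1 : ‖∑ k ∈ Icc 1 K, f (k + s) - ∑ k ∈ Icc 1 K, f (k + (s + 1))‖ ≤ 2 := by
      have : ∑ k ∈ Icc 1 K, f (k + s) - ∑ k ∈ Icc 1 K, f (k + (s + 1)) = f (1 + s) - f (K + 1 + s) := by
        clear ih
        induction K with
        | zero => simp
        | succ K ihK =>
          rw [sum_Icc_succ_top (by omega), sum_Icc_succ_top (by omega)]
          have e : ∀ x y : ℂ, ∀ u v : ℂ, (x + u) - (y + v) = (x - y) + (u - v) := by intros; ring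
          rw [e, ihK, show K + 1 + (s + 1) = K + 1 + 1 + s by ring]
          ring
      rw [this]
      refine (norm_sub_le _ _).trans ?_
      linarith [hf (1+s), hf (K+1+s)]
    calc _ = ‖(∑ k ∈ Icc 1 K, f k - ∑ k ∈ Icc 1 K, f (k + s)) +
          (∑ k ∈ Icc 1 K, f (k + s) - ∑ k ∈ Icc 1 K, f (k + (s + 1)))‖ := by congr 1; ring
      _ ≤ 2 * s + 2 := (norm_add_le _ _).trans (add_le_add ih h1)
      _ = _ := by push_cast; ring

lemma shift2 (F : ℕ → ℕ → ℂ) (hF : ∀ x y, ‖F x y‖ ≤ 1) (K N s u : ℕ) :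
    ‖∑ k ∈ Icc 1 K, ∑ n ∈ Icc 1 N, F k n - ∑ k ∈ Icc 1 K, ∑ n ∈ Icc 1 N, F (k + s) (n + u)‖
      ≤ 2 * s * N + 2 * u * K := by
  have h1 : ‖∑ k ∈ Icc 1 K, ∑ n ∈ Icc 1 N, F k n - ∑ k ∈ Icc 1 K, ∑ n ∈ Icc 1 N, F (k + s) n‖ ≤ 2 * s * N := by
    rw [sum_comm, sum_comm (s := Icc 1 K) (f := fun k n => F (k+s) n), ← sum_sub_distrib]
    refine (norm_sum_le _ _).trans ?_
    refine (sum_le_sum fun n _ => shift1 (fun k => F k n) (fun k => hF k n) K s).trans ?_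
    simp [mul_comm]
  have h2 : ‖∑ k ∈ Icc 1 K, ∑ n ∈ Icc 1 N, F (k + s) n - ∑ k ∈ Icc 1 K, ∑ n ∈ Icc 1 N, F (k + s) (n + u)‖ ≤ 2 * u * K := by
    rw [← sum_sub_distrib]
    refine (norm_sum_le _ _).trans ?_
    refine (sum_le_sum fun k _ => shift1 (fun n => F (k+s) n) (fun n => hF _ n) N u).trans ?_
    simp [mul_comm]
  calc _ = ‖(∑ k ∈ Icc 1 K, ∑ n ∈ Icc 1 N, F k n - ∑ k ∈ Icc 1 K, ∑ n ∈ Icc 1 N, F (k + s) n) +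
        (∑ k ∈ Icc 1 K, ∑ n ∈ Icc 1 N, F (k + s) n - ∑ k ∈ Icc 1 K, ∑ n ∈ Icc 1 N, F (k + s) (n + u))‖ := by
        congr 1; ring
    _ ≤ _ := (norm_add_le _ _).trans (add_le_add h1 h2)

lemma deg_count (K N A B Δ : ℕ) (hΔ : ∀ W, 0 < W → W ≤ K * B → #W.divisors ≤ Δ) :
    #{q ∈ Icc 1 K ×ˢ Icc 1 N ×ˢ Icc 1 A ×ˢ Icc 1 B | ¬ q.1 * q.2.2.2 ≠ q.2.1 * q.2.2.1} ≤ Δ * (K * B) := by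
  have : K * B = #(Icc 1 K ×ˢ Icc 1 B) := by simp
  rw [this]
  apply card_le_mul_card_image_of_maps_to (f := fun q : ℕ × ℕ × ℕ × ℕ => (q.1, q.2.2.2))
  · rintro ⟨k, n, a, b⟩ hq
    simp only [mem_filter, mem_product] at hq ⊢
    tauto
  · rintro ⟨k, b⟩ hy
    simp only [mem_product, mem_Icc] at hy
    have hpos : 0 < k * b := Nat.mul_pos (by omega) (by omega)
    refine le_trans ?_ (hΔ (k * b) hpos (Nat.mul_le_mul (by omega) (by omega)))
    apply card_le_card_of_injOn (fun q => q.2.1)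
    · rintro ⟨k', n, a, b'⟩ hq
      simp only [coe_filter, mem_filter, Set.mem_ofPred_eq, Prod.mk.injEq, not_not] at hq
      obtain ⟨⟨_, h⟩, rfl, rfl⟩ := hq
      simp only [mem_coe, Nat.mem_divisors]
      exact ⟨⟨a, h⟩, hpos.ne'⟩
    · rintro ⟨k', n, a, b'⟩ hq ⟨k'', n', a', b''⟩ hq' h
      simp only [coe_filter, mem_filter, mem_product, mem_Icc, Set.mem_ofPred_eq, Prod.mk.injEq, not_not] at hq hq' h
      obtain ⟨⟨⟨_, hn, _⟩, h1⟩, rfl, rfl⟩ := hq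
      obtain ⟨⟨_, h2⟩, rfl, rfl⟩ := hq'
      subst h
      have := Nat.eq_of_mul_eq_mul_left hn.1 (h1.symm.trans h2)
      simp [this]

variable {p : ℕ} [Fact p.Prime]

noncomputable def zz (p : ℕ) [Fact p.Prime] (i : (ℕ × ℕ) × (ℕ × ℕ × ℕ × ℕ)) : ZMod p × ZMod p :=
  ((nu i.1.1 i.2 : ZMod p) / (de i.1.1 i.2 : ZMod p), (nu i.1.2 i.2 : ZMod p) / (de i.1.2 i.2 : ZMod p))

lemma de_ne (K M N A B : ℕ) (hM : 1 ≤ M) (hsmall : (K + M * N) * (A + M * B) < p) (m : ℕ) (hm1 : 1 ≤ m)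
    (hm : m ≤ M) (q : ℕ × ℕ × ℕ × ℕ) (hq : q ∈ QQ K N A B) : (de m q : ZMod p) ≠ 0 := by
  obtain ⟨k, n, a, b⟩ := q
  rw [mem_QQ] at hq
  rw [Ne, ZMod.natCast_eq_zero_iff]
  intro h
  have h1 := Nat.le_of_dvd (by simp [de]; omega) h
  have h2 : de m (k,n,a,b) ≤ A + M * B := by
    simp only [de]
    exact Nat.add_le_add (by omega) (Nat.mul_le_mul hm (by omega))
  have : 1 * (A + M * B) ≤ (K + M * N) * (A + M * B) := Nat.mul_le_mul_right _ (by omega)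
  omega

lemma int_eq (K M N A B : ℕ) (hM : 1 ≤ M) (hsmall : (K + M * N) * (A + M * B) < p) (m1 m2 : ℕ)
    (h1 : 1 ≤ m1 ∧ m1 ≤ M) (h2 : 1 ≤ m2 ∧ m2 ≤ M)
    (q1 q2 : ℕ × ℕ × ℕ × ℕ) (hq1 : q1 ∈ QQ K N A B) (hq2 : q2 ∈ QQ K N A B)
    (h : (nu m1 q1 : ZMod p) / (de m1 q1 : ZMod p) = (nu m2 q2 : ZMod p) / (de m2 q2 : ZMod p)) :
    nu m1 q1 * de m2 q2 = nu m2 q2 * de m1 q1 := by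
  have d1 := de_ne K M N A B hM hsmall m1 h1.1 h1.2 q1 hq1
  have d2 := de_ne K M N A B hM hsmall m2 h2.1 h2.2 q2 hq2
  rw [div_eq_div_iff d1 d2] at h
  have hle : ∀ m m', m ≤ M → m' ≤ M → ∀ q ∈ QQ K N A B, ∀ q' ∈ QQ K N A B, nu m q * de m' q' < p := by
    intro m m' hm hm' ⟨k, n, a, b⟩ hq ⟨k', n', a', b'⟩ hq'
    rw [mem_QQ] at hq hq'
    refine lt_of_le_of_lt ?_ hsmall
    simp only [nu, de]
    apply Nat.mul_le_mul
    · exact Nat.add_le_add (by omega) (Nat.mul_le_mul hm (by omega))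
    · exact Nat.add_le_add (by omega) (Nat.mul_le_mul hm' (by omega))
  have h3 : ((nu m1 q1 * de m2 q2 : ℕ) : ZMod p) = ((nu m2 q2 * de m1 q1 : ℕ) : ZMod p) := by
    push_cast; exact h
  rw [ZMod.natCast_eq_natCast_iff', Nat.mod_eq_of_lt (hle _ _ h1.2 h2.2 _ hq1 _ hq2),
    Nat.mod_eq_of_lt (hle _ _ h2.2 h1.2 _ hq2 _ hq1)] at h3
  exact h3

lemma X_bound (χ : MulChar (ZMod p) ℂ) (hχ : χ ≠ 1) (K M N A B H r Δ : ℕ) (hM : 1 ≤ M) (hr : 1 ≤ r)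
    (hH : H < p) (hsmall : (K + M * N) * (A + M * B) < p)
    (hΔ : ∀ W, 0 < W → W ≤ (K + M * N) * (A + M * B) → #W.divisors ≤ Δ) :
    (∑ i ∈ I0 K N A B M, ‖Sg χ H (zz p i).1 (zz p i).2‖) ^ (2 * r) ≤
      ((M * M * (K * N * A * B) : ℕ) : ℝ) ^ (2 * r - 2) *
      ((2 * M * ∑ m1 ∈ Icc 1 M, ∑ m2 ∈ Icc 1 M, (K * N * A * B) * (Δ * ((K / m2 + 1) * (A / m1 + 1))) : ℕ) : ℝ) *
      ((r:ℝ) ^ (2 * r) * H ^ r * p ^ 2 + (2 * r) ^ 2 * p * H ^ (2 * r)) := by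
  have h1 := holder_step (I0 K N A B M) (zz p) (fun z => ‖Sg χ H z.1 z.2‖) (fun _ => norm_nonneg _) r hr
  refine h1.trans ?_
  have hI : #(I0 K N A B M) ≤ M * M * (K * N * A * B) := by
    rw [I0, card_product, card_product]
    simp only [Nat.card_Icc, Nat.add_sub_cancel]
    apply Nat.mul_le_mul_left
    refine (card_filter_le _ _).trans ?_
    simp [card_product, mul_assoc]
  have hE : #{x ∈ I0 K N A B M ×ˢ I0 K N A B M | zz p x.1 = zz p x.2} ≤
      2 * M * ∑ m1 ∈ Icc 1 M, ∑ m2 ∈ Icc 1 M, (K * N * A * B) * (Δ * ((K / m2 + 1) * (A / m1 + 1))) := by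
    refine le_trans (card_le_card ?_) (energy_nat K N A B M Δ hΔ)
    rintro ⟨⟨⟨m1, m1'⟩, q1⟩, ⟨⟨m2, m2'⟩, q2⟩⟩ hx
    rw [mem_filter] at hx ⊢
    refine ⟨hx.1, ?_⟩
    obtain ⟨hx1, hx2⟩ := hx
    simp only [I0, mem_product, mem_Icc] at hx1
    simp only [zz, Prod.mk.injEq] at hx2
    obtain ⟨⟨⟨a1, a2⟩, a3⟩, ⟨⟨a4, a5⟩, a6⟩⟩ := hx1
    exact ⟨int_eq K M N A B hM hsmall m1 m2 a1 a4 q1 q2 a3 a6 hx2.1,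
      int_eq K M N A B hM hsmall m1' m2' a2 a5 q1 q2 a3 a6 hx2.2⟩
  have hmom := moment_bound χ hχ r H hr hH
  rw [← Fintype.sum_prod_type' (f := fun z1 z2 => ‖Sg χ H z1 z2‖ ^ (2 * r))] at hmom
  gcongr

lemma inner_t (χ : MulChar (ZMod p) ℂ) (K M N A B H : ℕ) (hM : 1 ≤ M)
    (hsmall : (K + M * N) * (A + M * B) < p) (m m' : ℕ) (h1 : 1 ≤ m ∧ m ≤ M) (h2 : 1 ≤ m' ∧ m' ≤ M)
    (k n a b : ℕ) (hq : (k, n, a, b) ∈ QQ K N A B) :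
    ‖∑ t ∈ Icc 1 H, χ (((k + a * t) + m * (n + b * t) : ℕ) : ZMod p) *
        star (χ (((k + a * t) + m' * (n + b * t) : ℕ) : ZMod p))‖ ≤
      ‖Sg χ H (zz p ((m, m'), (k, n, a, b))).1 (zz p ((m, m'), (k, n, a, b))).2‖ := by
  have d1 := de_ne K M N A B hM hsmall m h1.1 h1.2 _ hq
  have d2 := de_ne K M N A B hM hsmall m' h2.1 h2.2 _ hq
  set D1 : ZMod p := (de m (k, n, a, b) : ZMod p) with hD1
  set D2 : ZMod p := (de m' (k, n, a, b) : ZMod p) with hD2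
  have : ∑ t ∈ Icc 1 H, χ (((k + a * t) + m * (n + b * t) : ℕ) : ZMod p) *
        star (χ (((k + a * t) + m' * (n + b * t) : ℕ) : ZMod p)) =
      (χ D1 * star (χ D2)) * Sg χ H (zz p ((m, m'), (k, n, a, b))).1 (zz p ((m, m'), (k, n, a, b))).2 := by
    rw [Sg, mul_sum]
    apply sum_congr rfl
    intro t _
    have e1 : (((k + a * t) + m * (n + b * t) : ℕ) : ZMod p) =
        D1 * ((zz p ((m, m'), (k, n, a, b))).1 + t) := by
      simp only [zz]
      rw [← hD1, mul_add D1, mul_div_cancel₀ _ d1, hD1]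
      simp only [nu, de]; push_cast; ring
    have e2 : (((k + a * t) + m' * (n + b * t) : ℕ) : ZMod p) =
        D2 * ((zz p ((m, m'), (k, n, a, b))).2 + t) := by
      simp only [zz]
      rw [← hD2, mul_add D2, mul_div_cancel₀ _ d2, hD2]
      simp only [nu, de]; push_cast; ring
    rw [e1, e2, map_mul, map_mul, star_mul']
    ring
  rw [this, norm_mul, norm_mul, norm_star]
  have := mul_le_one₀ (chi_norm_le χ D1) (norm_nonneg _) (chi_norm_le χ D2)
  exact mul_le_of_le_one_left (norm_nonneg _) this

/-- correlation sum -/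
noncomputable def TT (χ : MulChar (ZMod p) ℂ) (K N m m' : ℕ) : ℂ :=
  ∑ k ∈ Icc 1 K, ∑ n ∈ Icc 1 N, χ ((k + m * n : ℕ) : ZMod p) * star (χ ((k + m' * n : ℕ) : ZMod p))

lemma TT_bound (χ : MulChar (ZMod p) ℂ) (K M N A B H Δ : ℕ) (hM : 1 ≤ M)
    (hsmall : (K + M * N) * (A + M * B) < p)
    (hΔ : ∀ W, 0 < W → W ≤ (K + M * N) * (A + M * B) → #W.divisors ≤ Δ)
    (m m' : ℕ) (h1 : 1 ≤ m ∧ m ≤ M) (h2 : 1 ≤ m' ∧ m' ≤ M) :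
    ((A * B * H : ℕ) : ℝ) * ‖TT χ K N m m'‖ ≤
      ∑ q ∈ QQ K N A B, ‖Sg χ H (zz p ((m, m'), q)).1 (zz p ((m, m'), q)).2‖ +
      H * (Δ * (K * B)) + A * B * H * (2 * H * (A * N + B * K)) := by
  set F : ℕ → ℕ → ℂ := fun k n => χ ((k + m * n : ℕ) : ZMod p) * star (χ ((k + m' * n : ℕ) : ZMod p)) with hF
  have hF1 : ∀ x y, ‖F x y‖ ≤ 1 := by
    intro x y
    simp only [hF, norm_mul, norm_star]
    exact mul_le_one₀ (chi_norm_le χ _) (norm_nonneg _) (chi_norm_le χ _)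
  set R := Icc 1 K ×ˢ Icc 1 N ×ˢ Icc 1 A ×ˢ Icc 1 B with hR
  -- sum over shifts
  have hs : ‖∑ a ∈ Icc 1 A, ∑ b ∈ Icc 1 B, ∑ t ∈ Icc 1 H, (TT χ K N m m' -
      ∑ k ∈ Icc 1 K, ∑ n ∈ Icc 1 N, F (k + a * t) (n + b * t))‖ ≤ A * B * H * (2 * H * (A * N + B * K)) := by
    have : ∀ a ∈ Icc 1 A, ∀ b ∈ Icc 1 B, ∀ t ∈ Icc 1 H, ‖TT χ K N m m' -
      ∑ k ∈ Icc 1 K, ∑ n ∈ Icc 1 N, F (k + a * t) (n + b * t)‖ ≤ 2 * H * (A * N + B * K) := by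
      intro a ha b hb t ht
      refine (shift2 F hF1 K N (a * t) (b * t)).trans ?_
      simp only [mem_Icc] at ha hb ht
      have hat : ((a * t : ℕ) : ℝ) ≤ A * H := by exact_mod_cast Nat.mul_le_mul ha.2 ht.2
      have hbt : ((b * t : ℕ) : ℝ) ≤ B * H := by exact_mod_cast Nat.mul_le_mul hb.2 ht.2
      calc _ ≤ 2 * (A * H : ℝ) * N + 2 * (B * H : ℝ) * K := by gcongr
        _ = _ := by ring
    refine (norm_sum_le_of_le _ fun a ha => norm_sum_le_of_le _ fun b hb => norm_sum_le_of_le _ fun t ht => this a ha b hb t ht).trans ?_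
    simp; apply le_of_eq; ring
  have hsplit : ∑ a ∈ Icc 1 A, ∑ b ∈ Icc 1 B, ∑ t ∈ Icc 1 H, (TT χ K N m m' -
      ∑ k ∈ Icc 1 K, ∑ n ∈ Icc 1 N, F (k + a * t) (n + b * t)) =
      ((A * B * H : ℕ) : ℂ) * TT χ K N m m' -
        ∑ q ∈ R, ∑ t ∈ Icc 1 H, F (q.1 + q.2.2.1 * t) (q.2.1 + q.2.2.2 * t) := by
    simp only [sum_sub_distrib]
    congr 1
    · simp; ring
    · rw [hR]
      simp only [sum_product]
      calc _ = ∑ a ∈ Icc 1 A, ∑ b ∈ Icc 1 B, ∑ k ∈ Icc 1 K, ∑ n ∈ Icc 1 N, ∑ t ∈ Icc 1 H, F (k + a * t) (n + b * t) := by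
            apply sum_congr rfl; intro a _
            apply sum_congr rfl; intro b _
            rw [sum_comm]
            apply sum_congr rfl; intro k _
            rw [sum_comm]
        _ = ∑ a ∈ Icc 1 A, ∑ k ∈ Icc 1 K, ∑ n ∈ Icc 1 N, ∑ b ∈ Icc 1 B, ∑ t ∈ Icc 1 H, F (k + a * t) (n + b * t) := by
            apply sum_congr rfl; intro a _
            rw [sum_comm]
            apply sum_congr rfl; intro k _
            rw [sum_comm]
        _ = _ := by
            rw [sum_comm]
            apply sum_congr rfl; intro k _
            rw [sum_comm]
  have hmain : ‖∑ q ∈ R, ∑ t ∈ Icc 1 H, F (q.1 + q.2.2.1 * t) (q.2.1 + q.2.2.2 * t)‖ ≤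
      ∑ q ∈ QQ K N A B, ‖Sg χ H (zz p ((m, m'), q)).1 (zz p ((m, m'), q)).2‖ + H * (Δ * (K * B)) := by
    refine (norm_sum_le _ _).trans ?_
    rw [← sum_filter_add_sum_filter_not R (fun q => q.1 * q.2.2.2 ≠ q.2.1 * q.2.2.1)]
    apply add_le_add
    · apply sum_le_sum
      rintro ⟨k, n, a, b⟩ hq
      exact inner_t χ K M N A B H hM hsmall m m' h1 h2 k n a b hq
    · refine (sum_le_card_nsmul _ _ (H:ℝ) ?_).trans ?_
      · intro q _
        refine (norm_sum_le_of_le _ fun t _ => hF1 _ _).trans ?_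
        simp
      · rw [nsmul_eq_mul, mul_comm]
        gcongr
        have := deg_count K N A B Δ (fun W hW hW2 => hΔ W hW (hW2.trans (Nat.mul_le_mul (by omega) (by nlinarith))))
        exact_mod_cast this
  rw [hsplit] at hs
  have h3 := norm_sub_norm_le (((A * B * H : ℕ) : ℂ) * TT χ K N m m')
    (∑ q ∈ R, ∑ t ∈ Icc 1 H, F (q.1 + q.2.2.1 * t) (q.2.1 + q.2.2.2 * t))
  rw [norm_mul, Complex.norm_natCast] at h3
  linarith

lemma cauchy_S (χ : MulChar (ZMod p) ℂ) (K M N : ℕ) (α : ℕ → ℂ) (β : ℕ → ℕ → ℂ)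
    (hα : ∀ m, ‖α m‖ ≤ 1) (hβ : ∀ k n, ‖β k n‖ ≤ 1) :
    ‖∑ k ∈ Icc 1 K, ∑ n ∈ Icc 1 N, β k n * ∑ m ∈ Icc 1 M, α m * χ ((k + m * n : ℕ) : ZMod p)‖ ^ 2 ≤
      (K * N : ℝ) * ∑ m ∈ Icc 1 M, ∑ m' ∈ Icc 1 M, ‖TT χ K N m m'‖ := by
  set g : ℕ × ℕ → ℂ := fun y => ∑ m ∈ Icc 1 M, α m * χ ((y.1 + m * y.2 : ℕ) : ZMod p) with hg
  have h1 : ‖∑ k ∈ Icc 1 K, ∑ n ∈ Icc 1 N, β k n * ∑ m ∈ Icc 1 M, α m * χ ((k + m * n : ℕ) : ZMod p)‖ ≤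
      ∑ y ∈ Icc 1 K ×ˢ Icc 1 N, ‖g y‖ := by
    rw [sum_product]
    refine norm_sum_le_of_le _ fun k _ => norm_sum_le_of_le _ fun n _ => ?_
    rw [norm_mul]
    exact mul_le_of_le_one_left (norm_nonneg _) (hβ k n)
  have h2 : (∑ y ∈ Icc 1 K ×ˢ Icc 1 N, ‖g y‖) ^ 2 ≤ (K * N : ℝ) * ∑ y ∈ Icc 1 K ×ˢ Icc 1 N, ‖g y‖ ^ 2 := by
    have := sq_sum_le_card_mul_sum_sq (s := Icc 1 K ×ˢ Icc 1 N) (f := fun y => ‖g y‖)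
    simpa using this
  have h3 : ∑ y ∈ Icc 1 K ×ˢ Icc 1 N, ‖g y‖ ^ 2 ≤ ∑ m ∈ Icc 1 M, ∑ m' ∈ Icc 1 M, ‖TT χ K N m m'‖ := by
    have e : ((∑ y ∈ Icc 1 K ×ˢ Icc 1 N, ‖g y‖ ^ 2 : ℝ) : ℂ) =
        ∑ m ∈ Icc 1 M, ∑ m' ∈ Icc 1 M, (α m * star (α m')) * TT χ K N m m' := by
      push_cast
      have : ∀ y, ((‖g y‖ : ℂ)) ^ 2 = ∑ m ∈ Icc 1 M, ∑ m' ∈ Icc 1 M, (α m * star (α m')) *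
          (χ ((y.1 + m * y.2 : ℕ) : ZMod p) * star (χ ((y.1 + m' * y.2 : ℕ) : ZMod p))) := by
        intro y
        rw [← Complex.mul_conj']
        change g y * star (g y) = _
        rw [hg]
        simp only [star_sum, star_mul', sum_mul_sum]
        apply sum_congr rfl; intro m _
        apply sum_congr rfl; intro m' _
        ring
      simp only [this]
      rw [sum_comm]
      apply sum_congr rfl; intro m _
      rw [sum_comm]
      apply sum_congr rfl; intro m' _
      rw [← mul_sum, TT, sum_product]
    have hnn : 0 ≤ ∑ y ∈ Icc 1 K ×ˢ Icc 1 N, ‖g y‖ ^ 2 := by positivity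
    rw [← abs_of_nonneg hnn, ← Real.norm_eq_abs, ← Complex.norm_real, e]
    refine norm_sum_le_of_le _ fun m _ => norm_sum_le_of_le _ fun m' _ => ?_
    rw [norm_mul, norm_mul, norm_star]
    exact mul_le_of_le_one_left (norm_nonneg _) (mul_le_one₀ (hα m) (norm_nonneg _) (hα m'))
  calc _ ≤ (∑ y ∈ Icc 1 K ×ˢ Icc 1 N, ‖g y‖) ^ 2 := by gcongr
    _ ≤ _ := h2
    _ ≤ _ := by gcongr

lemma main_nat (χ : MulChar (ZMod p) ℂ) (hχ : χ ≠ 1) (K M N A B H r Δ : ℕ) (hM : 1 ≤ M) (hr : 1 ≤ r)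
    (hH : H < p) (hsmall : (K + M * N) * (A + M * B) < p)
    (hΔ : ∀ W, 0 < W → W ≤ (K + M * N) * (A + M * B) → #W.divisors ≤ Δ) (α : ℕ → ℂ) (β : ℕ → ℕ → ℂ)
    (hα : ∀ m, ‖α m‖ ≤ 1) (hβ : ∀ k n, ‖β k n‖ ≤ 1) :
    ∃ X : ℝ, 0 ≤ X ∧ X ^ (2 * r) ≤ ((M * M * (K * N * A * B) : ℕ) : ℝ) ^ (2 * r - 2) *
      ((2 * M * ∑ m1 ∈ Icc 1 M, ∑ m2 ∈ Icc 1 M, (K * N * A * B) * (Δ * ((K / m2 + 1) * (A / m1 + 1))) : ℕ) : ℝ) *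
      ((r:ℝ) ^ (2 * r) * H ^ r * p ^ 2 + (2 * r) ^ 2 * p * H ^ (2 * r)) ∧
    (A * B * H : ℝ) * ‖∑ k ∈ Icc 1 K, ∑ n ∈ Icc 1 N, β k n * ∑ m ∈ Icc 1 M, α m * χ ((k + m * n : ℕ) : ZMod p)‖ ^ 2
      ≤ (K * N : ℝ) * (X + M * M * (H * (Δ * (K * B)) + A * B * H * (2 * H * (A * N + B * K)))) := by
  refine ⟨_, sum_nonneg fun _ _ => norm_nonneg _, X_bound χ hχ K M N A B H r Δ hM hr hH hsmall hΔ, ?_⟩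
  have h1 := cauchy_S χ K M N α β hα hβ
  calc _ ≤ (A * B * H : ℝ) * ((K * N : ℝ) * ∑ m ∈ Icc 1 M, ∑ m' ∈ Icc 1 M, ‖TT χ K N m m'‖) := by gcongr
    _ = (K * N : ℝ) * ∑ m ∈ Icc 1 M, ∑ m' ∈ Icc 1 M, (((A * B * H : ℕ) : ℝ) * ‖TT χ K N m m'‖) := by
        simp only [← mul_sum]; push_cast; ring
    _ ≤ (K * N : ℝ) * ∑ m ∈ Icc 1 M, ∑ m' ∈ Icc 1 M,
        (∑ q ∈ QQ K N A B, ‖Sg χ H (zz p ((m, m'), q)).1 (zz p ((m, m'), q)).2‖ +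
        (H * (Δ * (K * B)) + A * B * H * (2 * H * (A * N + B * K)))) := by
        gcongr with m hm m' hm'
        rw [← add_assoc]
        exact TT_bound χ K M N A B H Δ hM hsmall hΔ m m' (mem_Icc.mp hm) (mem_Icc.mp hm')
    _ = _ := by
        simp only [sum_add_distrib, sum_const, Nat.card_Icc, Nat.add_sub_cancel, nsmul_eq_mul]
        rw [I0, sum_product, sum_product]
        ring
end CB


section FN

lemma harm_sum (K M : ℕ) (L : ℝ) (hL : 1 + Real.log M ≤ L) (hL1 : 1 ≤ L) :
    ((∑ m ∈ Icc 1 M, (K / m + 1) : ℕ) : ℝ) ≤ (K + M) * L := by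
  have h1 : ((∑ m ∈ Icc 1 M, (K / m + 1) : ℕ) : ℝ) ≤ K * (∑ m ∈ Icc 1 M, (m:ℝ)⁻¹) + M := by
    push_cast
    rw [sum_add_distrib, mul_sum]
    simp only [sum_const, Nat.card_Icc, Nat.add_sub_cancel, nsmul_eq_mul, mul_one]
    gcongr with m _
    rw [← div_eq_mul_inv]
    exact Nat.cast_div_le
  have h2 : ∑ m ∈ Icc 1 M, (m:ℝ)⁻¹ ≤ L := by
    have := harmonic_le_one_add_log M
    rw [harmonic_eq_sum_Icc] at this
    push_cast at this
    linarith
  calc _ ≤ _ := h1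
    _ ≤ K * L + M * L := by
        gcongr
        exact le_mul_of_one_le_right (by positivity) hL1
    _ = _ := by ring

lemma energy_real (K M N A B Δ : ℕ) (L a b : ℝ) (ha : 0 ≤ a) (hab : a ≤ b) (hL : 1 + Real.log M ≤ L)
    (hL1 : 1 ≤ L)
    (hK : 1 ≤ K * (2 * a)) (hM : 1 ≤ M * (2 * a)) (hN : 1 ≤ N * (2 * a)) (hA : 1 ≤ A * (4 * b))
    (hB : 1 ≤ B * (4 * b)) :
    ((2 * M * ∑ m1 ∈ Icc 1 M, ∑ m2 ∈ Icc 1 M, (K * N * A * B) * (Δ * ((K / m2 + 1) * (A / m1 + 1))) : ℕ) : ℝ)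
      ≤ (768 * (a ^ 3 * b ^ 2) * (Δ * L ^ 2)) * ((M * M * (K * N * A * B) : ℕ) : ℝ) ^ 2 := by
  have hb : 0 ≤ b := ha.trans hab
  have e : 2 * M * ∑ m1 ∈ Icc 1 M, ∑ m2 ∈ Icc 1 M, (K * N * A * B) * (Δ * ((K / m2 + 1) * (A / m1 + 1)))
      = 2 * M * ((K * N * A * B) * Δ) * ((∑ m ∈ Icc 1 M, (K / m + 1)) * (∑ m ∈ Icc 1 M, (A / m + 1))) := by
    rw [mul_assoc (2 * M)]
    congr 1
    rw [mul_comm (∑ m ∈ Icc 1 M, (K / m + 1)), sum_mul_sum, mul_sum]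
    apply sum_congr rfl; intro m1 _
    rw [mul_sum]
    apply sum_congr rfl; intro m2 _
    ring
  rw [e]
  have h1 := harm_sum K M L hL hL1
  have h2 := harm_sum A M L hL hL1
  have hL0 : 0 ≤ L := by linarith
  have h3 : (K + M : ℝ) ≤ 4 * a * (K * M) := by
    have : (K:ℝ) ≤ K * (M * (2 * a)) := le_mul_of_one_le_right (by positivity) hM
    have : (M:ℝ) ≤ M * (K * (2 * a)) := le_mul_of_one_le_right (by positivity) hK
    linarith
  have h4 : (A + M : ℝ) ≤ 6 * b * (A * M) := by
    have h5 : (A:ℝ) ≤ A * (M * (2 * a)) := le_mul_of_one_le_right (by positivity) hM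
    have h6 : (M:ℝ) ≤ M * (A * (4 * b)) := le_mul_of_one_le_right (by positivity) hA
    have h7 : (A:ℝ) * (M * (2 * a)) ≤ A * (M * (2 * b)) := by gcongr
    linarith
  have h8 : 1 ≤ (M * (2 * a)) * (N * (2 * a)) * (B * (4 * b)) := by
    apply one_le_mul_of_one_le_of_one_le _ hB
    exact one_le_mul_of_one_le_of_one_le hM hN
  push_cast at h1 h2 ⊢
  calc _ ≤ 2 * (M:ℝ) * ((K * N * A * B) * Δ) * ((4 * a * (K * M) * L) * (6 * b * (A * M) * L)) := by
        gcongr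
        · exact h1.trans (by gcongr)
        · exact h2.trans (by gcongr)
    _ ≤ (2 * (M:ℝ) * ((K * N * A * B) * Δ) * ((4 * a * (K * M) * L) * (6 * b * (A * M) * L))) *
        ((M * (2 * a)) * (N * (2 * a)) * (B * (4 * b))) := le_mul_of_one_le_right (by positivity) h8
    _ = _ := by ring

lemma floor_half (x : ℝ) (hx : 1 ≤ x) : x / 2 ≤ (⌊x⌋₊ : ℝ) := by
  have h1 := Nat.lt_floor_add_one x
  have h2 : (1:ℝ) ≤ (⌊x⌋₊ : ℝ) := by exact_mod_cast Nat.floor_pos.mpr hx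
  linarith

lemma xpow_aux (X c E Mo H P D μ η : ℝ) (r : ℕ) (hr : 1 ≤ r) (hP0 : 0 < P) (hc : 0 ≤ c) (hH : 0 ≤ H)
    (hμ : 0 ≤ μ) (hC3p : 1 ≤ 768 * D * μ) (hX : X ^ (2 * r) ≤ c ^ (2 * r - 2) * E * Mo)
    (hE : E ≤ (768 * D * P ^ (-1 - 2 * η)) * c ^ 2) (hE0 : 0 ≤ Mo) (hM : Mo ≤ μ * P * H ^ (2 * r)) :
    X ^ (2 * r) ≤ ((768 * D * μ) * P ^ (-(η / r)) * (c * H)) ^ (2 * r) := by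
  have hrr : (0:ℝ) < r := by exact_mod_cast (by omega : 0 < r)
  have hpp := Real.rpow_pos_of_pos hP0
  have hD : 0 ≤ D := by
    by_contra h
    push Not at h
    have : 768 * D * μ ≤ 0 := mul_nonpos_of_nonpos_of_nonneg (by linarith) hμ
    linarith
  calc X ^ (2 * r) ≤ _ := hX
    _ ≤ c ^ (2 * r - 2) * ((768 * D * P ^ (-1 - 2 * η)) * c ^ 2) * (μ * P * H ^ (2 * r)) := by
        apply mul_le_mul (mul_le_mul_of_nonneg_left hE (by positivity)) hM hE0
        have := (hpp (-1 - 2 * η)).le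
        positivity
    _ = (768 * D * μ) * (P ^ (-1 - 2 * η) * P ^ (1:ℝ)) * ((c ^ (2 * r - 2) * c ^ 2) * H ^ (2 * r)) := by
        rw [Real.rpow_one]; ring
    _ = (768 * D * μ) * P ^ (- 2 * η) * (c * H) ^ (2 * r) := by
        rw [← pow_add, show 2 * r - 2 + 2 = 2 * r by omega, ← Real.rpow_add hP0, mul_pow,
          show -1 - 2 * η + 1 = -2 * η by ring]
    _ ≤ (768 * D * μ) ^ (2 * r) * P ^ (- 2 * η) * (c * H) ^ (2 * r) := by
        have h1 := le_self_pow₀ hC3p (by omega : 2 * r ≠ 0)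
        have := (hpp (-2 * η)).le
        have : 0 ≤ (c * H) ^ (2 * r) := by positivity
        apply mul_le_mul_of_nonneg_right _ this
        apply mul_le_mul_of_nonneg_right h1 (hpp _).le
    _ = _ := by
        rw [mul_pow _ (c * H), mul_pow (768 * D * μ)]
        congr 2
        rw [← Real.rpow_natCast (P ^ _), ← Real.rpow_mul hP0.le]
        congr 1
        push_cast
        field_simp

set_option maxHeartbeats 4000000 in
lemma core_nat (η : ℝ) (hη : 0 < η) (hη2 : η < 1/40) :
    ∃ r : ℕ, 80 ≤ r ∧ ∃ C : ℝ, 1 ≤ C ∧ ∀ (p : ℕ) [Fact p.Prime], 32 ≤ (p:ℝ) → 4 < (p:ℝ) ^ (5 * η) →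
      ∀ (χ : MulChar (ZMod p) ℂ), χ ≠ 1 → ∀ (α : ℕ → ℂ) (β : ℕ → ℕ → ℂ),
      (∀ m, ‖α m‖ ≤ 1) → (∀ k n, ‖β k n‖ ≤ 1) → ∀ K M N : ℕ,
      (p:ℝ) ^ (1/5 + η) / 2 ≤ K → (K:ℝ) ≤ (p:ℝ) ^ (1/4 - η) →
      (p:ℝ) ^ (1/5 + η) / 2 ≤ M → (M:ℝ) ≤ (p:ℝ) ^ (1/4 - η) →
      (p:ℝ) ^ (1/5 + η) / 2 ≤ N → (N:ℝ) ≤ (p:ℝ) ^ (1/4 - η) →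
      ‖∑ k ∈ Icc 1 K, ∑ n ∈ Icc 1 N, β k n * ∑ m ∈ Icc 1 M, α m * χ ((k + m * n : ℕ) : ZMod p)‖ ^ 2 ≤
        C * (p:ℝ) ^ (-(η / r)) * (K * M * N) ^ 2 := by
  obtain ⟨C1, hC1, hdiv⟩ := divisor_bound (η/2) (by linarith)
  set r := ⌈2/η⌉₊ with hr
  have hr1 : 2 / η ≤ r := Nat.le_ceil _
  have hr80 : 80 ≤ r := by
    have : (80:ℝ) ≤ 2 / η := by rw [le_div_iff₀ hη]; linarith
    exact_mod_cast this.trans hr1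
  have hrη : 1 ≤ (η/2) * r := by
    rw [div_le_iff₀ hη] at hr1
    linarith
  set C2 : ℝ := (1 + 4/η)^2 with hC2
  have hC2p : 1 ≤ C2 := by
    rw [hC2]; apply one_le_pow₀; have : 0 < 4/η := by positivity
    linarith
  set μ : ℝ := (r:ℝ)^(2*r) * 2^r + (2*r)^2 with hμ
  have hμ1 : 1 ≤ μ := by
    have : (1:ℝ) ≤ (2*r)^2 := by
      apply one_le_pow₀
      have : (80:ℝ) ≤ r := by exact_mod_cast hr80
      linarith
    have : 0 ≤ (r:ℝ)^(2*r) * 2^r := by positivity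
    linarith
  set C3 : ℝ := 768 * (C1 * C2) * μ with hC3
  have hC3p : 1 ≤ C3 := by
    have h1 : 1 ≤ C1 * C2 := one_le_mul_of_one_le_of_one_le hC1 hC2p
    have h2 : 1 ≤ (C1 * C2) * μ := one_le_mul_of_one_le_of_one_le h1 hμ1
    rw [hC3]; linarith
  refine ⟨r, hr80, C3 + 8 * C1 + 4, by linarith, ?_⟩
  intro p hpF hp32 hp4 χ hχ α β hα hβ K M N hK1 hK2 hM1 hM2 hN1 hN2
  set P : ℝ := (p:ℝ) with hP
  have hP0 : 0 < P := by linarith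
  have hP1 : 1 ≤ P := by linarith
  have hmul : ∀ x y : ℝ, P ^ x * P ^ y = P ^ (x + y) := fun x y => (Real.rpow_add hP0 x y).symm
  have hmono : ∀ x y : ℝ, x ≤ y → P ^ x ≤ P ^ y := fun x y h => Real.rpow_le_rpow_of_exponent_le hP1 h
  have hpos : ∀ x : ℝ, 0 < P ^ x := fun x => Real.rpow_pos_of_pos hP0 x
  have hone : ∀ x : ℝ, 0 ≤ x → 1 ≤ P ^ x := fun x h => Real.one_le_rpow hP1 h
  have hP5 : 2 ≤ P ^ (1/5 : ℝ) := by
    have h32 : (32:ℝ) ^ (1/5:ℝ) = 2 := by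
      rw [show (32:ℝ) = 2 ^ (5:ℝ) by norm_num, ← Real.rpow_mul (by norm_num)]; norm_num
    rw [← h32]
    exact Real.rpow_le_rpow (by norm_num) hp32 (by norm_num)
  -- parameters
  set a := P ^ (-(1/5 + η)) with ha
  set b := P ^ (-(1/5) : ℝ) with hb
  have hrec : ∀ x : ℝ, P ^ x * P ^ (-x) = 1 := by
    intro x; rw [hmul]; simp
  have hKa : ∀ T : ℝ, P ^ (1/5 + η) / 2 ≤ T → 1 ≤ T * (2 * a) := by
    intro T hT
    have := mul_le_mul_of_nonneg_right hT (by positivity : 0 ≤ 2 * a)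
    have h2 := hrec (1/5 + η)
    rw [← ha] at h2
    linarith
  have hfl : ∀ T : ℝ, P ^ (1/5 + η) / 2 ≤ T → P ^ (1/5 : ℝ) / 2 ≤ T * P ^ (-η) := by
    intro T hT
    have := mul_le_mul_of_nonneg_right hT (hpos (-η)).le
    have h2 : P ^ (1/5 + η) * P ^ (-η) = P ^ (1/5 : ℝ) := by rw [hmul]; congr 1; ring
    linarith
  set A := ⌊K * P ^ (-η)⌋₊ with hA
  set B := ⌊N * P ^ (-η)⌋₊ with hB
  set H := ⌊P ^ (η/2)⌋₊ with hH
  have hAl : P ^ (1/5:ℝ) / 4 ≤ A := by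
    have h1 := hfl K hK1
    have := floor_half (K * P ^ (-η)) (by linarith)
    linarith
  have hBl : P ^ (1/5:ℝ) / 4 ≤ B := by
    have h1 := hfl N hN1
    have := floor_half (N * P ^ (-η)) (by linarith)
    linarith
  have hAu : (A:ℝ) ≤ K * P ^ (-η) := Nat.floor_le (by positivity)
  have hBu : (B:ℝ) ≤ N * P ^ (-η) := Nat.floor_le (by positivity)
  have hHl : P ^ (η/2) / 2 ≤ H := floor_half _ (hone _ (by linarith))
  have hHu : (H:ℝ) ≤ P ^ (η/2) := Nat.floor_le (by positivity)
  have h4b : ∀ T : ℝ, P ^ (1/5:ℝ) / 4 ≤ T → 1 ≤ T * (4 * b) := by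
    intro T hT
    have := mul_le_mul_of_nonneg_right hT (by positivity : 0 ≤ 4 * b)
    have h2 := hrec (1/5)
    rw [← hb] at h2
    linarith
  have hab : a ≤ b := hmono _ _ (by linarith)
  have hKpos : (0:ℝ) < K := lt_of_lt_of_le (by positivity) hK1
  have hMpos : (0:ℝ) < M := lt_of_lt_of_le (by positivity) hM1
  have hNpos : (0:ℝ) < N := lt_of_lt_of_le (by positivity) hN1
  have hApos : (0:ℝ) < A := lt_of_lt_of_le (by positivity) hAl
  have hBpos : (0:ℝ) < B := lt_of_lt_of_le (by positivity) hBl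
  have hHpos : (0:ℝ) < H := lt_of_lt_of_le (by positivity) hHl
  have hM1' : 1 ≤ M := by exact_mod_cast hMpos
  have hN1' : (1:ℝ) ≤ N := by
    have : 1 ≤ N := by exact_mod_cast hNpos
    exact_mod_cast this
  -- smallness
  have hsmall : (K + M * N) * (A + M * B) < p := by
    have h1 : (K + M * N : ℝ) ≤ 2 * P ^ (1/2 - 2 * η) := by
      have : (M * N : ℝ) ≤ P ^ (1/4 - η) * P ^ (1/4 - η) := by gcongr
      rw [hmul, show 1/4 - η + (1/4 - η) = 1/2 - 2 * η by ring] at this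
      have h2 := hmono (1/4 - η) (1/2 - 2*η) (by linarith)
      linarith
    have h2 : (A + M * B : ℝ) ≤ 2 * P ^ (1/2 - 3 * η) := by
      have h3 : (A:ℝ) ≤ P ^ (1/4 - η) * P ^ (-η) := hAu.trans (by gcongr)
      have h4 : (B:ℝ) ≤ P ^ (1/4 - η) * P ^ (-η) := hBu.trans (by gcongr)
      rw [hmul] at h3 h4
      have : (M * B : ℝ) ≤ P ^ (1/4 - η) * P ^ (1/4 - η + -η) := by gcongr
      rw [hmul, show 1/4 - η + (1/4 - η + -η) = 1/2 - 3 * η by ring] at this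
      have h2 := hmono (1/4 - η + -η) (1/2 - 3*η) (by linarith)
      linarith
    have h3 : ((K + M * N : ℝ)) * (A + M * B) ≤ (2 * P ^ (1/2 - 2 * η)) * (2 * P ^ (1/2 - 3 * η)) := by
      gcongr
    have h4 : (2 * P ^ (1/2 - 2 * η)) * (2 * P ^ (1/2 - 3 * η)) = 4 * P ^ (1 - 5 * η) := by
      rw [show (1:ℝ) - 5 * η = 1/2 - 2 * η + (1/2 - 3 * η) by ring, ← hmul]; ring
    have h5 : 4 * P ^ (1 - 5 * η) < P ^ (5 * η) * P ^ (1 - 5 * η) :=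
      mul_lt_mul_of_pos_right hp4 (hpos _)
    rw [hmul, show 5 * η + (1 - 5 * η) = 1 by ring, Real.rpow_one] at h5
    have : ((K + M * N : ℝ)) * (A + M * B) < (p:ℝ) := by
      rw [← hP]; linarith
    exact_mod_cast this
  have hHp : H < p := by
    have h1 : P ^ (η/2) < P ^ (1:ℝ) := Real.rpow_lt_rpow_of_exponent_lt (by linarith) (by linarith)
    rw [Real.rpow_one] at h1
    have : (H:ℝ) < (p:ℝ) := lt_of_le_of_lt hHu h1
    exact_mod_cast this
  set Δ := ⌊C1 * P ^ (η/2)⌋₊ with hΔd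
  have hΔu : (Δ:ℝ) ≤ C1 * P ^ (η/2) := Nat.floor_le (by positivity)
  have hΔ : ∀ W, 0 < W → W ≤ (K + M * N) * (A + M * B) → #W.divisors ≤ Δ := by
    intro W hW1 hW2
    apply Nat.le_floor
    refine (hdiv W hW1.ne').trans ?_
    gcongr
    rw [hP]
    exact_mod_cast (hW2.trans hsmall.le)
  -- log
  set L := 1 + Real.log P with hL
  have hlogP : 0 ≤ Real.log P := Real.log_nonneg hP1
  have hL1 : 1 ≤ L := by linarith
  have hMP : (M:ℝ) ≤ P := by
    refine hM2.trans ?_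
    have := hmono (1/4 - η) 1 (by linarith)
    rwa [Real.rpow_one] at this
  have hLM : 1 + Real.log M ≤ L := by
    have := Real.log_le_log hMpos hMP
    linarith
  have hL2 : L ^ 2 ≤ C2 * P ^ (η/2) := by
    have h1 := Real.log_le_rpow_div hP0.le (show 0 < η/4 by linarith)
    have h2 : L ≤ (1 + 4/η) * P ^ (η/4) := by
      have h3 := hone (η/4) (by linarith)
      have h4 : P ^ (η/4) / (η/4) = (4/η) * P ^ (η/4) := by field_simp
      rw [h4] at h1
      rw [hL]; linarith
    calc L ^ 2 ≤ ((1 + 4/η) * P ^ (η/4)) ^ 2 := by gcongr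
      _ = C2 * (P ^ (η/4) * P ^ (η/4)) := by rw [hC2]; ring
      _ = _ := by rw [hmul]; congr 2; ring
  obtain ⟨X, hX0, hX, hS⟩ := main_nat χ hχ K M N A B H r Δ hM1' (by omega) hHp hsmall hΔ α β hα hβ
  have hE := energy_real K M N A B Δ L a b (hpos _).le hab hLM hL1 (hKa _ hK1) (hKa _ hM1) (hKa _ hN1)
    (h4b _ hAl) (h4b _ hBl)
  set c : ℝ := ((M * M * (K * N * A * B) : ℕ) : ℝ) with hc
  have hcpos : 0 < c := by rw [hc]; push_cast; positivity
  have hE2 : 768 * (a ^ 3 * b ^ 2) * (Δ * L ^ 2) ≤ 768 * (C1 * C2) * P ^ (-1 - 2 * η) := by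
    have h1 : a ^ 3 * b ^ 2 = P ^ (-1 - 3 * η) := by
      rw [ha, hb, ← Real.rpow_natCast, ← Real.rpow_natCast, ← Real.rpow_mul hP0.le, ← Real.rpow_mul hP0.le, hmul]
      congr 1; push_cast; ring
    rw [h1]
    calc _ ≤ 768 * P ^ (-1 - 3 * η) * ((C1 * P ^ (η/2)) * (C2 * P ^ (η/2))) := by gcongr
      _ = 768 * (C1 * C2) * (P ^ (-1 - 3 * η) * P ^ (η/2) * P ^ (η/2)) := by ring
      _ = _ := by rw [hmul, hmul]; congr 2; ring
  have hMom : (r:ℝ) ^ (2 * r) * H ^ r * P ^ 2 + (2 * r) ^ 2 * P * H ^ (2 * r) ≤ μ * P * H ^ (2 * r) := by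
    have h1 : P ≤ 2 ^ r * (H:ℝ) ^ r := by
      calc P = P ^ (1:ℝ) := (Real.rpow_one _).symm
        _ ≤ P ^ ((η/2) * r) := hmono _ _ hrη
        _ = (P ^ (η/2)) ^ r := by rw [Real.rpow_mul hP0.le, Real.rpow_natCast]
        _ ≤ (2 * H) ^ r := by gcongr; linarith
        _ = _ := by rw [mul_pow]
    have h2 : (r:ℝ) ^ (2 * r) * H ^ r * P ^ 2 ≤ (r:ℝ) ^ (2 * r) * H ^ r * (P * (2 ^ r * (H:ℝ) ^ r)) := by
      rw [sq]; gcongr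
    calc _ ≤ (r:ℝ) ^ (2 * r) * H ^ r * (P * (2 ^ r * (H:ℝ) ^ r)) + (2 * r) ^ 2 * P * H ^ (2 * r) := by linarith
      _ = _ := by rw [hμ, two_mul, pow_add, pow_add]; ring
  have hX2 : X ^ (2 * r) ≤ (C3 * P ^ (-(η / r)) * (c * H)) ^ (2 * r) :=
    xpow_aux X c _ _ H P (C1 * C2) μ η r (by omega) hP0 hcpos.le hHpos.le (hμ1.trans' zero_le_one) hC3p
      hX (hE.trans (mul_le_mul_of_nonneg_right hE2 (sq_nonneg c))) (by positivity) hMom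
  have hX3 : X ≤ C3 * P ^ (-(η / r)) * (c * H) :=
    le_of_pow_le_pow_left₀ (by omega) (by positivity) hX2
  -- final assembly
  set w := P ^ (-(η / r)) with hw
  have hrr : (80:ℝ) ≤ r := by exact_mod_cast hr80
  have hwη : P ^ (-(η/2)) ≤ w := by
    apply hmono
    have : η / r ≤ η / 2 := by gcongr; linarith
    linarith
  have t1 : (H:ℝ) * (Δ * (K * B)) ≤ 8 * C1 * w * (H * (K * N * A * B)) := by
    -- Δ ≤ 8 C1 w N A
    have h1 : (Δ:ℝ) ≤ 8 * C1 * w * (N * A) := by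
      have h2 : P ^ (η/2) ≤ 4 * w * A := by
        have h3 : P ^ (η/2) ≤ P ^ (-(η/2)) * P ^ (1/5:ℝ) := by
          rw [hmul]; exact hmono _ _ (by linarith)
        have h4 : P ^ (-(η/2)) * P ^ (1/5:ℝ) ≤ w * (4 * A) := by
          gcongr; linarith
        linarith
      calc (Δ:ℝ) ≤ C1 * P ^ (η/2) := hΔu
        _ ≤ C1 * (4 * w * A) := by gcongr
        _ ≤ C1 * (4 * w * A) * (2 * N) := le_mul_of_one_le_right (by positivity) (by linarith)
        _ = _ := by ring
    calc (H:ℝ) * (Δ * (K * B)) ≤ H * ((8 * C1 * w * (N * A)) * (K * B)) := by gcongr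
      _ = _ := by ring
  have t2 : 2 * (H:ℝ) * (A * N + B * K) ≤ 4 * w * (K * N) := by
    have h1 : (A * N + B * K : ℝ) ≤ 2 * P ^ (-η) * (K * N) := by
      have e1 : (A * N : ℝ) ≤ (K * P ^ (-η)) * N := by gcongr
      have e2 : (B * K : ℝ) ≤ (N * P ^ (-η)) * K := by gcongr
      linarith
    calc 2 * (H:ℝ) * (A * N + B * K) ≤ 2 * P ^ (η/2) * (2 * P ^ (-η) * (K * N)) := by gcongr
      _ = 4 * (P ^ (η/2) * P ^ (-η)) * (K * N) := by ring
      _ = 4 * P ^ (-(η/2)) * (K * N) := by rw [hmul]; congr 3; ring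
      _ ≤ _ := by gcongr
  have hABH : (0:ℝ) < A * B * H := by positivity
  apply le_of_mul_le_mul_left _ hABH
  refine hS.trans ?_
  have hc' : c = M * M * (K * N * A * B) := by rw [hc]; push_cast; ring
  rw [hc'] at hX3
  calc (K * N : ℝ) * (X + M * M * (H * (Δ * (K * B)) + A * B * H * (2 * H * (A * N + B * K))))
      ≤ (K * N : ℝ) * (C3 * w * (M * M * (K * N * A * B) * H) + M * M * (8 * C1 * w * (H * (K * N * A * B)) +
          A * B * H * (4 * w * (K * N)))) := by gcongr
    _ = _ := by ring
end FN


lemma triv_bound (p : ℕ) [Fact p.Prime] (χ : MulChar (ZMod p) ℂ) (α : ℕ → ℂ) (β : ℕ → ℕ → ℂ)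
    (hα : ∀ m, ‖α m‖ ≤ 1) (hβ : ∀ k n, ‖β k n‖ ≤ 1) (K M N : ℕ) :
    ‖∑ k ∈ Icc 1 K, ∑ n ∈ Icc 1 N, β k n * ∑ m ∈ Icc 1 M, α m * χ ((k + m * n : ℕ) : ZMod p)‖ ≤
      (K : ℝ) * M * N := by
  have h1 : ∀ k n, ‖β k n * ∑ m ∈ Icc 1 M, α m * χ ((k + m * n : ℕ) : ZMod p)‖ ≤ M := by
    intro k n
    rw [norm_mul]
    have h2 : ‖∑ m ∈ Icc 1 M, α m * χ ((k + m * n : ℕ) : ZMod p)‖ ≤ ∑ m ∈ Icc 1 M, (1:ℝ) := by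
      refine norm_sum_le_of_le _ fun m _ => ?_
      rw [norm_mul]
      exact mul_le_one₀ (hα m) (norm_nonneg _) (chi_norm_le χ _)
    simp only [sum_const, Nat.card_Icc, Nat.add_sub_cancel, nsmul_eq_mul, mul_one] at h2
    calc _ ≤ 1 * (M:ℝ) := mul_le_mul (hβ k n) h2 (norm_nonneg _) zero_le_one
      _ = _ := one_mul _
  calc _ ≤ ∑ k ∈ Icc 1 K, ∑ n ∈ Icc 1 N, (M:ℝ) :=
        norm_sum_le_of_le _ fun k _ => norm_sum_le_of_le _ fun n _ => h1 k n
    _ = _ := by simp; ring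

lemma core_real (η : ℝ) (hη : 0 < η) : ∃ κ : ℝ, 0 < κ ∧ ∃ C : ℝ, 0 < C ∧ ∀ (p : ℕ) [Fact p.Prime],
      ∀ (χ : MulChar (ZMod p) ℂ), χ ≠ 1 → ∀ (α : ℕ → ℂ) (β : ℕ → ℕ → ℂ),
      (∀ m, ‖α m‖ ≤ 1) → (∀ k n, ‖β k n‖ ≤ 1) → ∀ K M N : ℝ,
        (p : ℝ) ^ ((1 : ℝ) / 5 + η) ≤ K → K < (p : ℝ) ^ ((1 : ℝ) / 4 - η) →
        (p : ℝ) ^ ((1 : ℝ) / 5 + η) ≤ M → M < (p : ℝ) ^ ((1 : ℝ) / 4 - η) →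
        (p : ℝ) ^ ((1 : ℝ) / 5 + η) ≤ N → N < (p : ℝ) ^ ((1 : ℝ) / 4 - η) →
      ‖∑ k ∈ Icc 1 ⌊K⌋₊, ∑ n ∈ Icc 1 ⌊N⌋₊, β k n * ∑ m ∈ Icc 1 ⌊M⌋₊, α m * χ ((k + m * n : ℕ) : ZMod p)‖ ≤
        C * (K * M * N) * (p:ℝ) ^ (-κ) := by
  rcases le_or_gt (1/40) η with hbig | hsm
  · refine ⟨1, one_pos, 1, one_pos, ?_⟩
    intro p hpF χ hχ α β hα hβ K M N hK1 hK2
    exfalso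
    have hp1 : (1:ℝ) ≤ p := by exact_mod_cast hpF.out.one_le
    have := Real.rpow_le_rpow_of_exponent_le hp1 (show (1:ℝ)/4 - η ≤ 1/5 + η by linarith)
    linarith
  obtain ⟨r, hr80, C, hC, hcore⟩ := core_nat η hη hsm
  have hrr : (80:ℝ) ≤ r := by exact_mod_cast hr80
  have hκ0 : 0 < η / (2 * r) := by positivity
  have hκη : η / (2 * r) ≤ η := div_le_self hη.le (by linarith)
  refine ⟨η / (2 * r), hκ0, C + 32, by linarith, ?_⟩
  intro p hpF χ hχ α β hα hβ K M N hK1 hK2 hM1 hM2 hN1 hN2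
  have hp1 : (1:ℝ) ≤ p := by exact_mod_cast hpF.out.one_le
  have hp0 : (0:ℝ) < p := by linarith
  have hge : (1:ℝ) ≤ (p : ℝ) ^ ((1 : ℝ) / 5 + η) := Real.one_le_rpow hp1 (by linarith)
  have hK0 : 0 ≤ K := by linarith
  have hM0 : 0 ≤ M := by linarith
  have hN0 : 0 ≤ N := by linarith
  have hKf := Nat.floor_le hK0
  have hMf := Nat.floor_le hM0
  have hNf := Nat.floor_le hN0
  have hKh := floor_half K (by linarith)
  have hMh := floor_half M (by linarith)
  have hNh := floor_half N (by linarith)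
  have hprod : (⌊K⌋₊ : ℝ) * ⌊M⌋₊ * ⌊N⌋₊ ≤ K * M * N := by gcongr
  have hKMN : 0 ≤ K * M * N := by positivity
  have hw0 : 0 < (p:ℝ) ^ (-(η / (2 * r))) := Real.rpow_pos_of_pos hp0 _
  by_cases hcase : 32 ≤ (p:ℝ) ∧ 4 < (p:ℝ) ^ (5 * η)
  · have h := hcore p hcase.1 hcase.2 χ hχ α β hα hβ ⌊K⌋₊ ⌊M⌋₊ ⌊N⌋₊ (by linarith) (by linarith)
      (by linarith) (by linarith) (by linarith) (by linarith)
    have hsq : (p:ℝ) ^ (-(η / r)) = ((p:ℝ) ^ (-(η / (2 * r)))) ^ 2 := by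
      rw [← Real.rpow_natCast, ← Real.rpow_mul hp0.le]
      congr 1
      push_cast
      field_simp
    rw [hsq] at h
    refine abs_le_of_sq_le_sq' (b := (C + 32) * (K * M * N) * (p:ℝ) ^ (-(η / (2 * r)))) ?_ (by positivity) |>.2
    refine h.trans ?_
    have hCC : C ≤ (C + 32) ^ 2 := by nlinarith
    calc C * ((p:ℝ) ^ (-(η / (2 * r)))) ^ 2 * (⌊K⌋₊ * ⌊M⌋₊ * ⌊N⌋₊) ^ 2
        ≤ (C + 32) ^ 2 * ((p:ℝ) ^ (-(η / (2 * r)))) ^ 2 * (K * M * N) ^ 2 := by gcongr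
      _ = _ := by ring
  · have hpk : (p:ℝ) ^ (η / (2 * r)) ≤ 32 := by
      rw [not_and_or] at hcase
      push Not at hcase
      rcases hcase with h | h
      · have := Real.rpow_le_rpow_of_exponent_le hp1 (show η / (2 * r) ≤ 1 by linarith)
        rw [Real.rpow_one] at this
        linarith
      · have := Real.rpow_le_rpow_of_exponent_le hp1 (show η / (2 * r) ≤ 5 * η by linarith)
        linarith
    refine (triv_bound p χ α β hα hβ _ _ _).trans (hprod.trans ?_)
    have h1 : 1 ≤ (C + 32) * (p:ℝ) ^ (-(η / (2 * r))) := by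
      have h2 : (p:ℝ) ^ (η / (2 * r)) * (p:ℝ) ^ (-(η / (2 * r))) = 1 := by
        rw [← Real.rpow_add hp0]; simp
      rw [← h2]
      gcongr
      linarith
    calc K * M * N ≤ K * M * N * ((C + 32) * (p:ℝ) ^ (-(η / (2 * r)))) := le_mul_of_one_le_right hKMN h1
      _ = _ := by ring


/-- Corollary 2.10, first bound (trilinear sums twisted by additive characters of
rational functions). -/
theorem trilinear_rational_additive (η : ℝ) (hη : 0 < η) (d₁ d₂ : ℕ)
    (hd₁ : 0 < d₁) (hd₂ : 0 < d₂) :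
    ∃ κ : ℝ, 0 < κ ∧ ∃ C : ℝ, 0 < C ∧ ∀ (p : ℕ), p.Prime →
      ∀ (χ : MulChar (ZMod p) ℂ), χ ≠ 1 →
      ∀ (ψ : AddChar (ZMod p) ℂ), ψ ≠ 1 →
      ∀ (P₁ P₂ : Polynomial (ZMod p)), P₂ ≠ 0 →
        P₁.natDegree ≤ d₁ → P₂.natDegree ≤ d₁ →
      ∀ (Q₁ Q₂ : MvPolynomial (Fin 2) (ZMod p)), Q₂ ≠ 0 →
        Q₁.totalDegree ≤ d₂ → Q₂.totalDegree ≤ d₂ →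
      ∀ (K M N : ℝ),
        (p : ℝ) ^ ((1 : ℝ) / 5 + η) ≤ K → K < (p : ℝ) ^ ((1 : ℝ) / 4 - η) →
        (p : ℝ) ^ ((1 : ℝ) / 5 + η) ≤ M → M < (p : ℝ) ^ ((1 : ℝ) / 4 - η) →
        (p : ℝ) ^ ((1 : ℝ) / 5 + η) ≤ N → N < (p : ℝ) ^ ((1 : ℝ) / 4 - η) →
      ‖∑ k ∈ Icc 1 ⌊K⌋₊, ∑ m ∈ Icc 1 ⌊M⌋₊, ∑ n ∈ Icc 1 ⌊N⌋₊,
          if Polynomial.eval (m : ZMod p) P₂ ≠ 0 ∧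
              MvPolynomial.eval ![(k : ZMod p), (n : ZMod p)] Q₂ ≠ 0 then
            χ ((k + m * n : ℕ) : ZMod p) *
              ψ (Polynomial.eval (m : ZMod p) P₁ * (Polynomial.eval (m : ZMod p) P₂)⁻¹ +
                MvPolynomial.eval ![(k : ZMod p), (n : ZMod p)] Q₁ *
                  (MvPolynomial.eval ![(k : ZMod p), (n : ZMod p)] Q₂)⁻¹)
          else 0‖ ≤ C * (K * M * N) * (p : ℝ) ^ (-κ) := by
  obtain ⟨κ, hκ, C, hC, h⟩ := core_real η hη
  refine ⟨κ, hκ, C, hC, ?_⟩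
  intro p hp χ hχ ψ _ P₁ P₂ _ _ _ Q₁ Q₂ _ _ _ K M N hK1 hK2 hM1 hM2 hN1 hN2
  haveI : Fact p.Prime := ⟨hp⟩
  classical
  have key := h p χ hχ
    (fun m => if Polynomial.eval (m : ZMod p) P₂ ≠ 0 then
      ψ (Polynomial.eval (m : ZMod p) P₁ * (Polynomial.eval (m : ZMod p) P₂)⁻¹) else 0)
    (fun k n => if MvPolynomial.eval ![(k : ZMod p), (n : ZMod p)] Q₂ ≠ 0 then
      ψ (MvPolynomial.eval ![(k : ZMod p), (n : ZMod p)] Q₁ *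
        (MvPolynomial.eval ![(k : ZMod p), (n : ZMod p)] Q₂)⁻¹) else 0)
    (by
      intro m
      split_ifs
      · exact (AddChar.norm_apply ψ _).le
      · simp)
    (by
      intro k n
      split_ifs
      · exact (AddChar.norm_apply ψ _).le
      · simp) K M N hK1 hK2 hM1 hM2 hN1 hN2
  refine le_trans (le_of_eq ?_) key
  congr 1
  refine sum_congr rfl fun k _ => ?_
  rw [sum_comm]
  refine sum_congr rfl fun n _ => ?_
  rw [mul_sum]
  refine sum_congr rfl fun m _ => ?_
  by_cases h1 : Polynomial.eval (m : ZMod p) P₂ = 0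
  · simp [h1]
  · by_cases h2 : MvPolynomial.eval ![(k : ZMod p), (n : ZMod p)] Q₂ = 0
    · simp [h2]
    · rw [if_pos ⟨h1, h2⟩, if_pos h1, if_pos h2, AddChar.map_add_eq_mul]
      ring
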